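/- Let φ_{N,k}(x) = e^{-x} Σ_{n=0}^N (-1)^n ℓ_{n,k} x^n/n! for N ≥ 0. Then the Lindelöf Hypothesis holds if and only if, for every positive integer k, the functions φ_{N,k} converge to φ_k in L²(0,∞) as N → ∞. -/

import Mathlib

open scoped Real Topology
open Complex Filter MeasureTheory Finset Asymptotics

/-- The analytic extension of `s ↦ ((s-1) * ζ(s))^k` to `s = 1` (where its value is `1`). -/
noncomputable def zetaPowAux (k : ℕ) : ℂ → ℂ :=
  Function.update (fun s : ℂ => ((s - 1) * riemannZeta s) ^ k) 1 1

/-- `lam k j` is the Taylor coefficient `λ_{j,k}`, i.e. the `j`-th derivative at `s = 1` of the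
analytic extension of `(s-1)^k ζ(s)^k`; these numbers are real, and we record their real part. -/
noncomputable def lam (k j : ℕ) : ℝ :=
  (iteratedDeriv j (zetaPowAux k) 1).re

/-- The Fourier coefficients `ℓ_{n,k}` for `n ≥ -k` (an integer index). -/
noncomputable def ell (k : ℕ) (n : ℤ) : ℝ :=
  if 1 ≤ n then
    (-1 : ℝ) ^ n.toNat *
      ∑ j ∈ Finset.Icc 1 n.toNat,
        ((n.toNat - 1).choose (j - 1) : ℝ) * lam k (j + k) / (Nat.factorial (j + k))
  else
    (-1 : ℝ) ^ k *
      ∑ j ∈ Finset.range ((k + n).toNat + 1),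
        ((k - j).choose (-n).toNat : ℝ) * (-1 : ℝ) ^ j * lam k j / (Nat.factorial j)

/-- The Lindelöf Hypothesis: `ζ(1/2 + it) = O(|t|^ε)` for every `ε > 0`. -/
def LindelofHypothesis : Prop :=
  ∀ ε : ℝ, 0 < ε → ∃ C : ℝ, ∀ t : ℝ, 1 ≤ |t| →
    ‖riemannZeta (1 / 2 + t * Complex.I)‖ ≤ C * |t| ^ ε

/-- `dk k n` is the Piltz divisor function `d_k(n)`: the number of representations of `n` as an
ordered product of `k` positive integers (the `k`-th Dirichlet-convolution power of `ζ`). -/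
noncomputable def dk (k n : ℕ) : ℕ := (ArithmeticFunction.zeta ^ k) n

/-- The coefficients `a_{j,k}` of the polynomial `P_k`. -/
noncomputable def aCoef (k j : ℕ) : ℝ :=
  (-1 : ℝ) ^ (k - 1 - j) *
    ∑ i ∈ Finset.range (k - 1 - j + 1), (-1 : ℝ) ^ i * lam k i / (Nat.factorial i)

/-- The error term `Δ_k(x) = (Σ_{1 ≤ n ≤ x} d_k(n)) - x P_k(log x)` in the Piltz divisor
problem. -/
noncomputable def Deltak (k : ℕ) (x : ℝ) : ℝ :=
  (∑ n ∈ Finset.Icc 1 ⌊x⌋₊, (dk k n : ℝ)) -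
    x * ∑ j ∈ Finset.range k, aCoef k j / (Nat.factorial j) * (Real.log x) ^ j

/-- The `n`-th Laguerre polynomial. -/
noncomputable def laguerre (n : ℕ) (u : ℝ) : ℝ :=
  ∑ j ∈ Finset.range (n + 1), (n.choose j : ℝ) * (-1 : ℝ) ^ j * u ^ j / (Nat.factorial j)

/-- The Bessel function of the first kind of order `0`. -/
noncomputable def besselJ0 (u : ℝ) : ℝ :=
  ∑' m : ℕ, (-1 : ℝ) ^ m * (u / 2) ^ (2 * m) / ((Nat.factorial m : ℝ) ^ 2)

/-- `φ_k(x) = ∫_1^∞ Δ_k(r) J₀(2 √(x log r)) r⁻² dr`. -/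
noncomputable def phik (k : ℕ) (x : ℝ) : ℝ :=
  ∫ r in Set.Ioi (1 : ℝ), Deltak k r * besselJ0 (2 * Real.sqrt (x * Real.log r)) / r ^ 2

/-- `∫_1^∞ {t} t^{-s-1} dt`, the Mellin-type transform of the fractional part. -/
noncomputable def fractMellin (s : ℂ) : ℂ :=
  ∫ t in Set.Ioi (1 : ℝ), ((Int.fract t : ℝ) : ℂ) * (t : ℂ) ^ (-(s + 1))

theorem norm_fract_mul_cpow_le (s : ℂ) {t : ℝ} (ht : 1 < t) :
    ‖((Int.fract t : ℝ) : ℂ) * (t : ℂ) ^ (-(s + 1))‖ ≤ t ^ (-(s.re + 1)) := by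
  rw [norm_mul, Complex.norm_cpow_eq_rpow_re_of_pos (by linarith), Complex.norm_real,
    Real.norm_of_nonneg (Int.fract_nonneg t)]
  have h : (-(s + 1)).re = -(s.re + 1) := by simp
  rw [h]
  exact mul_le_of_le_one_left (by positivity) (Int.fract_lt_one t).le

theorem norm_fractMellin_le {s : ℂ} (hs : 0 < s.re) : ‖fractMellin s‖ ≤ 1 / s.re := by
  have h1 : -(s.re + 1) < -1 := by linarith
  have h2 := integral_Ioi_rpow_of_lt h1 one_pos
  have h3 : (1 : ℝ) / s.re = ∫ t in Set.Ioi (1 : ℝ), t ^ (-(s.re + 1)) := by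
    rw [h2]
    simp [neg_div_neg_eq]
  rw [h3]
  refine norm_integral_le_of_norm_le (integrableOn_Ioi_rpow_of_lt h1 one_pos) ?_
  filter_upwards [ae_restrict_mem measurableSet_Ioi] with t ht
  exact norm_fract_mul_cpow_le s ht

theorem integrableOn_fract_mul_cpow {s : ℂ} (hs : 0 < s.re) :
    IntegrableOn (fun t : ℝ => ((Int.fract t : ℝ) : ℂ) * (t : ℂ) ^ (-(s + 1))) (Set.Ioi 1) := by
  have h1 : -(s.re + 1) < -1 := by linarith
  refine Integrable.mono' (integrableOn_Ioi_rpow_of_lt h1 one_pos) ?_ ?_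
  · refine AEStronglyMeasurable.mul ?_ ?_
    · exact (Complex.measurable_ofReal.comp measurable_fract).aestronglyMeasurable
    · refine ContinuousOn.aestronglyMeasurable ?_ measurableSet_Ioi
      intro t ht
      have ht' : (1 : ℝ) < t := ht
      exact (continuousAt_ofReal_cpow_const t _ (Or.inr (by linarith))).continuousWithinAt
  · filter_upwards [ae_restrict_mem measurableSet_Ioi] with t ht
    exact norm_fract_mul_cpow_le s ht

theorem differentiableAt_fractMellin {s : ℂ} (hs : 0 < s.re) :
    DifferentiableAt ℂ fractMellin s := by
  set f : ℝ → ℂ := (Set.Ioi (1 : ℝ)).indicator (fun t => ((Int.fract t : ℝ) : ℂ)) with hf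
  have hmeas : Measurable f :=
    (Complex.measurable_ofReal.comp measurable_fract).indicator measurableSet_Ioi
  have hbd : ∀ t, ‖f t‖ ≤ 1 := by
    intro t
    refine (norm_indicator_le_norm_self _ _).trans ?_
    rw [Complex.norm_real, Real.norm_of_nonneg (Int.fract_nonneg t)]
    exact (Int.fract_lt_one t).le
  have hM : fractMellin = fun s => mellin f (-s) := by
    funext s
    unfold fractMellin mellin
    have h : ∀ t : ℝ, (t : ℂ) ^ (-s - 1) • f t =
        (Set.Ioi (1 : ℝ)).indicator
          (fun t => ((Int.fract t : ℝ) : ℂ) * (t : ℂ) ^ (-(s + 1))) t := by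
      intro t
      by_cases ht : t ∈ Set.Ioi (1 : ℝ)
      · rw [hf, Set.indicator_of_mem ht, Set.indicator_of_mem ht, smul_eq_mul, mul_comm]
        congr 2; ring
      · rw [hf, Set.indicator_of_notMem ht, Set.indicator_of_notMem ht, smul_zero]
    simp_rw [h]
    rw [setIntegral_indicator measurableSet_Ioi]
    congr 2
    ext t
    simp only [Set.mem_Ioi, Set.mem_inter_iff]
    constructor
    · intro h; exact ⟨by linarith, h⟩
    · exact fun h => h.2
  rw [hM]
  have hd : DifferentiableAt ℂ (mellin f) (-s) := by
    refine mellin_differentiableAt_of_isBigO_rpow (a := 0) (b := -s.re - 1) ?_ ?_ ?_ ?_ ?_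
    · refine LocallyIntegrable.locallyIntegrableOn ?_ _
      refine (locallyIntegrable_const (1 : ℝ)).mono hmeas.aestronglyMeasurable ?_
      exact Filter.Eventually.of_forall fun t => by simpa using hbd t
    · refine IsBigO.of_bound 1 (Filter.Eventually.of_forall fun t => ?_)
      simpa using hbd t
    · simpa using hs
    · refine IsBigO.of_bound 1 ?_
      filter_upwards [Ioo_mem_nhdsGT (show (0 : ℝ) < 1 by norm_num)] with t ht
      have : t ∉ Set.Ioi (1 : ℝ) := by simpa using ht.2.le
      rw [hf, Set.indicator_of_notMem this, norm_zero]
      positivity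
    · simp
  exact hd.comp s differentiableAt_id.neg

theorem riemannZeta₁_eq_of_one_lt_re {s : ℂ} (hs : 1 < s.re) :
    riemannZeta₁ s = s * (1 - (s - 1) * fractMellin s) := by
  have hs1 : s ≠ 1 := by rintro rfl; simp at hs
  have hs1' : s - 1 ≠ 0 := sub_ne_zero.mpr hs1
  have h1 : riemannZeta s =
      s * ∫ t in Set.Ioi (1 : ℝ), (∑ k ∈ Icc 1 ⌊t⌋₊, (1 : ℕ → ℂ) k) * t ^ (-(s + 1)) := by
    rw [← LSeries_one_eq_riemannZeta hs]
    refine LSeries_eq_mul_integral _ zero_le_one hs (LSeriesSummable_one_iff.mpr hs) ?_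
    refine IsBigO.of_bound 1 (Filter.Eventually.of_forall fun n => ?_)
    simp
  have h2 : IntegrableOn (fun t : ℝ => (t : ℂ) ^ (-s)) (Set.Ioi 1) :=
    integrableOn_Ioi_cpow_of_lt (by simpa using hs) one_pos
  have h3 : ∫ t : ℝ in Set.Ioi 1, (t : ℂ) ^ (-s) = 1 / (s - 1) := by
    rw [integral_Ioi_cpow_of_lt (by simpa using hs) one_pos]
    simp only [ofReal_one, one_cpow]
    rw [← neg_div_neg_eq]
    congr 1 <;> ring
  have h4 : ∫ t in Set.Ioi (1 : ℝ), (∑ k ∈ Icc 1 ⌊t⌋₊, (1 : ℕ → ℂ) k) * t ^ (-(s + 1)) =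
      1 / (s - 1) - fractMellin s := by
    rw [← h3, fractMellin, ← integral_sub h2 (integrableOn_fract_mul_cpow (by linarith))]
    refine setIntegral_congr_fun measurableSet_Ioi fun t ht => ?_
    have ht' : (1 : ℝ) < t := ht
    have ht0 : (t : ℂ) ≠ 0 := by exact_mod_cast (by linarith : t ≠ 0)
    have e1 : (t : ℂ) ^ (-s) = t * (t : ℂ) ^ (-(s + 1)) := by
      rw [show -s = 1 + -(s + 1) by ring, Complex.cpow_add _ _ ht0, Complex.cpow_one]
      
    have e2 : (∑ k ∈ Icc 1 ⌊t⌋₊, (1 : ℕ → ℂ) k) = (t : ℂ) - ((Int.fract t : ℝ) : ℂ) := by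
      simp
      have : Int.fract t = t - (⌊t⌋₊ : ℝ) := by
        rw [Int.fract, natCast_floor_eq_intCast_floor (by linarith)]
      rw [this]; push_cast; ring
    simp only [e1, e2]
    ring
  have h5 := riemannZeta_eq_inv_sub_mul hs1
  rw [h1, h4] at h5
  field_simp at h5
  rw [← h5]

theorem riemannZeta₁_eq_of_re_pos {s : ℂ} (hs : 0 < s.re) :
    riemannZeta₁ s = s * (1 - (s - 1) * fractMellin s) := by
  have hopen : IsOpen {z : ℂ | 0 < z.re} := isOpen_lt continuous_const Complex.continuous_re
  have hpre : IsPreconnected {z : ℂ | 0 < z.re} :=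
    (convex_halfSpace_re_gt 0).isPreconnected
  have h1 : AnalyticOnNhd ℂ riemannZeta₁ {z : ℂ | 0 < z.re} :=
    differentiable_riemannZeta₁.differentiableOn.analyticOnNhd hopen
  have h2 : AnalyticOnNhd ℂ (fun s => s * (1 - (s - 1) * fractMellin s)) {z : ℂ | 0 < z.re} := by
    refine DifferentiableOn.analyticOnNhd (fun z hz => ?_) hopen
    have := differentiableAt_fractMellin hz
    exact DifferentiableAt.differentiableWithinAt (by fun_prop)
  refine h1.eqOn_of_preconnected_of_eventuallyEq h2 hpre (z₀ := 2) (by simp) ?_ hs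
  have : {z : ℂ | 1 < z.re} ∈ 𝓝 (2 : ℂ) :=
    (isOpen_lt continuous_const Complex.continuous_re).mem_nhds (by simp)
  filter_upwards [this] with z hz using riemannZeta₁_eq_of_one_lt_re hz

theorem norm_riemannZeta₁_le {s : ℂ} (hs : 0 < s.re) :
    ‖riemannZeta₁ s‖ ≤ ‖s‖ * (1 + ‖s - 1‖ / s.re) := by
  rw [riemannZeta₁_eq_of_re_pos hs, norm_mul]
  gcongr
  refine (norm_sub_le _ _).trans ?_
  rw [norm_one, norm_mul, div_eq_mul_one_div]
  gcongr
  exact norm_fractMellin_le hs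

theorem norm_riemannZeta₁_mul_cpow_le {s : ℂ} {ε : ℝ} (hε : 0 < ε) (hs : 1 / 2 ≤ s.re) :
    ‖riemannZeta₁ s * s ^ (-((1 + ε : ℝ) : ℂ))‖ ≤ 2 ^ ε * (1 + ‖s - 1‖ / s.re) := by
  have hs0 : 0 < s.re := by linarith
  have hn : 1 / 2 ≤ ‖s‖ := hs.trans (Complex.re_le_norm s)
  have hpos : 0 < ‖s‖ := by linarith
  have hneg : -((1 + ε : ℝ) : ℂ) = ((-(1 + ε) : ℝ) : ℂ) := by push_cast; ring
  rw [norm_mul, hneg, Complex.norm_cpow_real]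
  have h1 : ‖s‖ * ‖s‖ ^ (-(1 + ε)) ≤ 2 ^ ε := by
    have : ‖s‖ * ‖s‖ ^ (-(1 + ε)) = ‖s‖ ^ (-ε) := by
      rw [show -(1 + ε) = -ε - 1 by ring, Real.rpow_sub_one hpos.ne']
      field_simp
    rw [this]
    calc ‖s‖ ^ (-ε) ≤ (1 / 2 : ℝ) ^ (-ε) :=
          Real.rpow_le_rpow_of_nonpos (by norm_num) hn (by linarith)
      _ = 2 ^ ε := by
          rw [one_div, Real.inv_rpow (by norm_num), Real.rpow_neg (by norm_num), inv_inv]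
  calc ‖riemannZeta₁ s‖ * ‖s‖ ^ (-(1 + ε))
      ≤ (‖s‖ * (1 + ‖s - 1‖ / s.re)) * ‖s‖ ^ (-(1 + ε)) := by
        gcongr; exact norm_riemannZeta₁_le hs0
    _ = (‖s‖ * ‖s‖ ^ (-(1 + ε))) * (1 + ‖s - 1‖ / s.re) := by ring
    _ ≤ _ := by gcongr

theorem LindelofHypothesis.norm_riemannZeta₁_le (h : LindelofHypothesis) {ε : ℝ} (hε : 0 < ε) :
    ∃ C : ℝ, ∀ s : ℂ, 1 / 2 ≤ s.re → ‖riemannZeta₁ s‖ ≤ C * ‖s‖ ^ (1 + ε) := by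
  obtain ⟨C, hC⟩ := h ε hε
  set K : ℝ := max C (2 ^ ε * 5) with hK
  have hK0 : 0 ≤ K := le_max_of_le_right (by positivity)
  refine ⟨K, ?_⟩
  set f : ℂ → ℂ := fun z =>
    riemannZeta₁ (z + 1 / 2) * (z + 1 / 2) ^ (-((1 + ε : ℝ) : ℂ)) with hf
  have hre2 : ∀ z : ℂ, (z + 1 / 2).re = z.re + 1 / 2 := by intro z; simp
  have key : ∀ z : ℂ, 0 ≤ z.re → ‖f z‖ ≤ K := by
    intro z hz
    refine PhragmenLindelof.right_half_plane_of_bounded_on_real (f := f) ?_ ?_ ?_ ?_ hz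
    · refine DifferentiableOn.diffContOnCl fun w hw => ?_
      have hw' : 0 ≤ w.re := by simpa using hw
      have h0 : w + 1 / 2 ∈ Complex.slitPlane := Or.inl (by rw [hre2]; linarith)
      have h1 : DifferentiableAt ℂ (fun w : ℂ => (w + 1 / 2) ^ (-((1 + ε : ℝ) : ℂ))) w :=
        DifferentiableAt.cpow_const (by fun_prop) h0
      have h2 : DifferentiableAt ℂ (fun w : ℂ => riemannZeta₁ (w + 1 / 2)) w := by fun_prop
      exact (h2.mul h1).differentiableWithinAt
    · refine ⟨1, by norm_num, 1, IsBigO.of_bound (2 ^ ε * 4) ?_⟩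
      refine Filter.mem_inf_of_right ?_
      intro w hw
      have hw' : 0 < w.re := hw
      have h1 := norm_riemannZeta₁_mul_cpow_le (s := w + 1 / 2) hε (by rw [hre2]; linarith)
      refine h1.trans ?_
      rw [Real.rpow_one, one_mul, Real.norm_of_nonneg (Real.exp_pos _).le, mul_assoc]
      gcongr
      have h2 : ‖w + 1 / 2 - 1‖ ≤ ‖w‖ + 1 / 2 := by
        rw [show w + 1 / 2 - 1 = w - 1 / 2 by ring]
        refine (norm_sub_le _ _).trans ?_
        norm_num
      have h3 : ‖w + 1 / 2 - 1‖ / (w + 1 / 2).re ≤ (‖w‖ + 1 / 2) / (1 / 2) := by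
        gcongr
        rw [hre2]; linarith
      have h4 := Real.add_one_le_exp ‖w‖
      have : 0 ≤ ‖w‖ := norm_nonneg w
      rw [div_div_eq_mul_div] at h3
      linarith
    · refine ⟨2 ^ ε * 2, ?_⟩
      simp only [eventually_map]
      filter_upwards [eventually_ge_atTop (1 : ℝ)] with x hx
      have hr : ((x : ℂ) + 1 / 2).re = x + 1 / 2 := by simp
      have h1 := norm_riemannZeta₁_mul_cpow_le (s := (x : ℂ) + 1 / 2) hε (by rw [hr]; linarith)
      refine h1.trans ?_
      gcongr
      have h2 : (x : ℂ) + 1 / 2 - 1 = ((x - 1 / 2 : ℝ) : ℂ) := by push_cast; ring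
      rw [h2, Complex.norm_real, Real.norm_of_nonneg (by linarith), hr]
      have : (x - 1 / 2) / (x + 1 / 2) ≤ 1 := by
        rw [div_le_one (by linarith)]; linarith
      linarith
    · intro x
      have hr : ((x : ℂ) * I + 1 / 2).re = 1 / 2 := by simp
      have hi : ((x : ℂ) * I + 1 / 2).im = x := by simp
      have hnn : ‖(x : ℂ) * I + 1 / 2 - 1‖ = ‖(x : ℂ) * I + 1 / 2‖ := by
        rw [← sq_eq_sq₀ (norm_nonneg _) (norm_nonneg _), Complex.sq_norm, Complex.sq_norm,
          Complex.normSq_apply, Complex.normSq_apply]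
        simp
        norm_num
      rcases le_total 1 |x| with hx | hx
      · set s : ℂ := (x : ℂ) * I + 1 / 2 with hs
        have hpos : 0 < ‖s‖ := by
          have := Complex.re_le_norm s
          rw [hr] at this; linarith
        have hs1 : s ≠ 1 := by
          intro h; rw [h] at hr; norm_num at hr
        have hz : riemannZeta₁ s = (s - 1) * riemannZeta s := by
          rw [riemannZeta_eq_inv_sub_mul hs1, mul_inv_cancel_left₀ (sub_ne_zero.mpr hs1)]
        have hb := hC x hx
        rw [show (1 / 2 : ℂ) + x * I = s by rw [hs]; ring] at hb
        have hxs : |x| ≤ ‖s‖ := by rw [← hi]; exact Complex.abs_im_le_norm s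
        have hneg : -((1 + ε : ℝ) : ℂ) = ((-(1 + ε) : ℝ) : ℂ) := by push_cast; ring
        have hb2 : ‖riemannZeta s‖ ≤ K * ‖s‖ ^ ε := by
          refine hb.trans ?_
          refine mul_le_mul (le_max_left _ _) ?_ (by positivity) hK0
          gcongr
        calc ‖f (x * I)‖ = ‖s‖ * ‖riemannZeta s‖ * ‖s‖ ^ (-(1 + ε)) := by
              change ‖riemannZeta₁ s * s ^ (-((1 + ε : ℝ) : ℂ))‖ = _
              rw [norm_mul, hneg, Complex.norm_cpow_real, hz, norm_mul, hnn]
          _ ≤ ‖s‖ * (K * ‖s‖ ^ ε) * ‖s‖ ^ (-(1 + ε)) := by gcongr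
          _ = K * (‖s‖ ^ (1 + ε) * ‖s‖ ^ (-(1 + ε))) := by
              rw [Real.rpow_add hpos, Real.rpow_one]; ring
          _ = K := by
              rw [← Real.rpow_add hpos]; simp
      · have h1 := norm_riemannZeta₁_mul_cpow_le (s := (x : ℂ) * I + 1 / 2) hε (by rw [hr])
        refine h1.trans ((mul_le_mul_of_nonneg_left ?_ (by positivity)).trans (le_max_right _ _))
        rw [hnn, hr]
        have : ‖(x : ℂ) * I + 1 / 2‖ ≤ 1 + 1 / 2 := by
          refine (norm_add_le _ _).trans ?_
          simp
          linarith
        linarith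
  intro s hs
  have h1 := key (s - 1 / 2) (by simp; linarith)
  have hpos : 0 < ‖s‖ := by linarith [Complex.re_le_norm s]
  have hneg : -((1 + ε : ℝ) : ℂ) = ((-(1 + ε) : ℝ) : ℂ) := by push_cast; ring
  simp only [hf, sub_add_cancel] at h1
  rw [norm_mul, hneg, Complex.norm_cpow_real, Real.rpow_neg hpos.le, ← div_eq_mul_inv,
    div_le_iff₀ (by positivity)] at h1
  exact h1

theorem zetaPowAux_eq (k : ℕ) : zetaPowAux k = fun s => riemannZeta₁ s ^ k := by
  funext s
  by_cases hs : s = 1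
  · simp [zetaPowAux, hs]
  · rw [zetaPowAux, Function.update_of_ne hs, riemannZeta_eq_inv_sub_mul hs,
      mul_inv_cancel_left₀ (sub_ne_zero.mpr hs)]

theorem zetaPowAux_conj (k : ℕ) (s : ℂ) :
    zetaPowAux k ((starRingEnd ℂ) s) = (starRingEnd ℂ) (zetaPowAux k s) := by
  by_cases hs : s = 1
  · simp [zetaPowAux, hs]
  · have hs' : (starRingEnd ℂ) s ≠ 1 := by
      intro h; apply hs; simpa using congrArg (starRingEnd ℂ) h
    simp [zetaPowAux, Function.update_of_ne hs, Function.update_of_ne hs', riemannZeta_conj]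

theorem iteratedDeriv_conj_of_symm {f : ℂ → ℂ}
    (hf : ∀ z, f ((starRingEnd ℂ) z) = (starRingEnd ℂ) (f z)) (n : ℕ) (z : ℂ) :
    iteratedDeriv n f ((starRingEnd ℂ) z) = (starRingEnd ℂ) (iteratedDeriv n f z) := by
  induction n generalizing z with
  | zero => simpa using hf z
  | succ n ih =>
    rw [iteratedDeriv_succ]
    have h : (starRingEnd ℂ) ∘ iteratedDeriv n f ∘ (starRingEnd ℂ) = iteratedDeriv n f := by
      funext w; simp [ih]
    have h2 := deriv_conj_conj (f := iteratedDeriv n f)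
    rw [h] at h2
    have h3 := congrFun h2 ((starRingEnd ℂ) z)
    simpa using h3

theorem lam_coe (k j : ℕ) : (lam k j : ℂ) = iteratedDeriv j (zetaPowAux k) 1 := by
  have h := iteratedDeriv_conj_of_symm (zetaPowAux_conj k) j 1
  rw [map_one] at h
  exact Complex.conj_eq_iff_re.mp h.symm

/-- The Taylor coefficient `λ_{j,k} / j!` of `(s-1)^k ζ(s)^k` at `s = 1`. -/
noncomputable def taylorCoef (k j : ℕ) : ℝ := lam k j / (Nat.factorial j)

theorem hasSum_taylorCoef (k : ℕ) (s : ℂ) :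
    HasSum (fun j => (taylorCoef k j : ℂ) * (s - 1) ^ j) (riemannZeta₁ s ^ k) := by
  have hd : Differentiable ℂ (zetaPowAux k) := by rw [zetaPowAux_eq]; fun_prop
  have h := Complex.hasSum_taylorSeries_of_entire hd 1 s
  rw [zetaPowAux_eq] at h
  convert! h using 2 with j
  rw [← zetaPowAux_eq, ← lam_coe, taylorCoef]
  simp only [smul_eq_mul]
  push_cast
  ring

theorem exists_entire_shift {f : ℂ → ℂ} {a : ℕ → ℂ} (hf : Differentiable ℂ f)
    (h : ∀ s, HasSum (fun j => a j * (s - 1) ^ j) (f s)) (k : ℕ) :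
    ∃ g : ℂ → ℂ, Differentiable ℂ g ∧ (∀ s, HasSum (fun j => a (j + k) * (s - 1) ^ j) (g s)) ∧
      ∀ s, f s = ∑ j ∈ range k, a j * (s - 1) ^ j + (s - 1) ^ k * g s := by
  induction k with
  | zero => exact ⟨f, hf, h, by simp⟩
  | succ k ih =>
    obtain ⟨g, hg, hs, hfg⟩ := ih
    have hg1 : g 1 = a k := by
      have := (hs 1).unique (hasSum_single 0 fun j hj => by simp [hj])
      simpa using this
    have hslope : ∀ s, (s - 1) * dslope g 1 s = g s - g 1 := fun s => by
      simpa using sub_smul_dslope g 1 s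
    refine ⟨dslope g 1, ?_, fun s => ?_, fun s => ?_⟩
    · rw [← differentiableOn_univ] at hg ⊢
      exact (Complex.differentiableOn_dslope Filter.univ_mem).mpr hg
    · by_cases hs1 : s = 1
      · subst hs1
        have hd : HasFPowerSeriesAt g
            (FormalMultilinearSeries.ofScalars ℂ (fun j => a (j + k))) 1 := by
          rw [hasFPowerSeriesAt_iff]
          refine Filter.Eventually.of_forall fun z => ?_
          simpa [mul_comm, FormalMultilinearSeries.coeff_ofScalars] using hs (1 + z)
        have h1 : dslope g 1 1 = a (1 + k) := by
          rw [dslope_same, hd.deriv]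
          simp
        rw [h1, add_comm 1 k]
        have h2 := hasSum_single (f := fun j => a (j + (k + 1)) * ((1 : ℂ) - 1) ^ j) 0
          fun j hj => by simp [hj]
        simpa using h2
      · have hne : s - 1 ≠ 0 := sub_ne_zero.mpr hs1
        have h1 := (hasSum_nat_add_iff' 1).mpr (hs s)
        have h2 := h1.mul_left ((s - 1)⁻¹)
        have h3 : (s - 1)⁻¹ * (g s - ∑ i ∈ range 1, a (i + k) * (s - 1) ^ i) = dslope g 1 s := by
          rw [inv_mul_eq_iff_eq_mul₀ hne, hslope, hg1]
          simp
        rw [h3] at h2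
        convert! h2 using 2 with j
        rw [show j + 1 + k = j + (k + 1) by ring, pow_succ]
        field_simp
    · rw [hfg s, sum_range_succ, add_assoc]
      congr 1
      have := hslope s
      rw [hg1] at this
      rw [pow_succ, mul_assoc, this]
      ring

/-- Substituting `s = 1 / (1 + w)` in a power series in `s - 1`. -/
theorem hasSum_comp_inv_one_add {g : ℂ → ℂ} {e : ℕ → ℂ}
    (hg : ∀ s, HasSum (fun j => e j * (s - 1) ^ j) (g s)) {w : ℂ} (hw : ‖w‖ < 1) :
    HasSum (fun n : ℕ => (-1) ^ (n + 1) * (∑ i ∈ range (n + 1), (n.choose i : ℂ) * e (i + 1)) *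
      w ^ (n + 1)) (g (1 / (1 + w)) - e 0) := by
  have h1w : 1 + w ≠ 0 := by
    intro h
    have : w = -1 := by linear_combination h
    rw [this] at hw; simp at hw
  set F : ℕ × ℕ → ℂ := fun x =>
    e (x.1 + 1) * ((-1) ^ (x.1 + 1 + x.2) * ((x.2 + x.1).choose x.1 : ℂ) * w ^ (x.1 + x.2 + 1))
    with hF
  have hinner : ∀ i, HasSum (fun p => F (i, p)) (e (i + 1) * (1 / (1 + w) - 1) ^ (i + 1)) := by
    intro i
    have h := hasSum_choose_mul_geometric_of_norm_lt_one i (r := -w) (by simpa using hw)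
    have h2 := h.mul_left (e (i + 1) * (-w) ^ (i + 1))
    convert! h2 using 1
    · funext p
      simp only [hF]
      rw [neg_pow w p, neg_pow w (i + 1), pow_add (-1 : ℂ) (i + 1) p]
      ring
    · have : 1 / (1 + w) - 1 = -w / (1 + w) := by field_simp; ring
      rw [this, div_pow]
      simp only [sub_neg_eq_add]
      ring
  have hnorm : ∀ i, HasSum (fun p => ‖F (i, p)‖)
      (‖e (i + 1) * (((1 : ℂ) + ((‖w‖ / (1 - ‖w‖) : ℝ) : ℂ)) - 1) ^ (i + 1)‖) := by
    intro i
    have h := hasSum_choose_mul_geometric_of_norm_lt_one i (r := ‖w‖) (by simpa using hw)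
    have h2 := h.mul_left (‖e (i + 1)‖ * ‖w‖ ^ (i + 1))
    convert! h2 using 1
    · funext p
      simp only [hF, norm_mul, norm_pow, norm_neg, norm_one, one_pow, one_mul,
        Complex.norm_natCast]
      ring
    · have : 0 ≤ ‖w‖ / (1 - ‖w‖) := div_nonneg (norm_nonneg _) (by linarith)
      rw [add_sub_cancel_left, norm_mul, norm_pow, Complex.norm_real, Real.norm_of_nonneg this,
        div_pow]
      ring
  have hsum : Summable F := by
    refine Summable.of_norm ?_
    refine (summable_prod_of_nonneg fun _ => norm_nonneg _).mpr ⟨fun i => (hnorm i).summable, ?_⟩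
    simp_rw [fun i => (hnorm i).tsum_eq]
    have := (hg (1 + ((‖w‖ / (1 - ‖w‖) : ℝ) : ℂ))).summable.norm
    exact (summable_nat_add_iff 1).mpr this
  have hval : ∑' x, F x = g (1 / (1 + w)) - e 0 := by
    have h1 := hsum.hasSum.prod_fiberwise hinner
    have h2 := (hasSum_nat_add_iff' 1).mpr (hg (1 / (1 + w)))
    simp only [sum_range_one, pow_zero, mul_one] at h2
    exact h1.unique h2
  have h3 := hsum.hasSum
  rw [hval, ← HasAntidiagonal.sigmaAntidiagonalEquivProd.hasSum_iff] at h3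
  convert! h3.sigma fun n => hasSum_fintype _ using 1
  funext n
  have h4 := Finset.sum_coe_sort (antidiagonal n) F
  simp only [Function.comp_def, HasAntidiagonal.sigmaAntidiagonalEquivProd_apply]
  rw [h4, Finset.Nat.sum_antidiagonal_eq_sum_range_succ_mk, mul_sum, sum_mul]
  refine sum_congr rfl fun i hi => ?_
  have hi' : i ≤ n := Nat.lt_succ_iff.mp (mem_range.mp hi)
  simp only [hF]
  rw [show n - i + i = n by omega, show i + 1 + (n - i) = n + 1 by omega,
    show i + (n - i) + 1 = n + 1 by omega]
  ring

theorem one_add_mul_sum_alternating (c : ℕ → ℂ) (x : ℂ) (n : ℕ) :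
    (1 + x) * ∑ m ∈ range (n + 1), ((-1) ^ m * ∑ i ∈ range (m + 1), (-1) ^ i * c i) * x ^ m =
      ∑ m ∈ range (n + 1), c m * x ^ m +
        ((-1) ^ n * ∑ i ∈ range (n + 1), (-1) ^ i * c i) * x ^ (n + 1) := by
  induction n with
  | zero => simp; ring
  | succ n ih =>
    rw [sum_range_succ, mul_add, ih, sum_range_succ (fun m => c m * x ^ m) (n + 1),
      sum_range_succ (fun i => (-1) ^ i * c i) (n + 1)]
    have h : ((-1 : ℂ) ^ (n + 1)) * ((-1) ^ (n + 1)) = 1 := by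
      rw [← mul_pow]; simp
    linear_combination (c (n + 1) * x ^ (n + 1)) * h

theorem aCoef_coe (k j : ℕ) : (aCoef k j : ℂ) =
    (-1) ^ (k - 1 - j) * ∑ i ∈ range (k - 1 - j + 1), (-1) ^ i * (taylorCoef k i : ℂ) := by
  simp only [aCoef, taylorCoef]
  push_cast
  congr 1
  exact sum_congr rfl fun i _ => by ring

theorem mul_sum_aCoef {k : ℕ} (hk : 0 < k) (s : ℂ) :
    s * ∑ j ∈ range k, (aCoef k j : ℂ) * (s - 1) ^ (k - 1 - j) =
      ∑ m ∈ range k, (taylorCoef k m : ℂ) * (s - 1) ^ m + aCoef k 0 * (s - 1) ^ k := by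
  obtain ⟨n, rfl⟩ : ∃ n, k = n + 1 := ⟨k - 1, by omega⟩
  have h := one_add_mul_sum_alternating (fun i => (taylorCoef (n + 1) i : ℂ)) (s - 1) n
  rw [show 1 + (s - 1) = s by ring] at h
  rw [← sum_range_reflect, aCoef_coe]
  simp only [Nat.add_sub_cancel, Nat.sub_zero] at h ⊢
  rw [← h]
  congr 1
  refine sum_congr rfl fun m hm => ?_
  have hm' : m ≤ n := Nat.lt_succ_iff.mp (mem_range.mp hm)
  rw [aCoef_coe]
  simp only [Nat.add_sub_cancel]
  rw [show n - (n - m) = m by omega]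

theorem ell_zero_eq {k : ℕ} (hk : 0 < k) : ell k 0 = taylorCoef k k - aCoef k 0 := by
  obtain ⟨n, rfl⟩ : ∃ n, k = n + 1 := ⟨k - 1, by omega⟩
  have h : ((((n + 1 : ℕ) : ℤ) + 0).toNat + 1) = n + 1 + 1 := by omega
  rw [ell, if_neg (by norm_num), h, sum_range_succ, aCoef, taylorCoef]
  simp only [neg_zero, Int.toNat_zero, Nat.choose_zero_right, Nat.cast_one, one_mul,
    Nat.add_sub_cancel, Nat.sub_zero, mul_add]
  have h1 : ((-1 : ℝ) ^ (n + 1)) * ((-1) ^ (n + 1)) = 1 := by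
    rw [← mul_pow]; simp
  rw [pow_succ (-1 : ℝ) n] at h1 ⊢
  linear_combination (lam (n + 1) (n + 1) / ((n + 1).factorial : ℝ)) * h1

theorem ell_succ_coe (k n : ℕ) : (ell k ((n + 1 : ℕ) : ℤ) : ℂ) =
    (-1) ^ (n + 1) * ∑ i ∈ range (n + 1), (n.choose i : ℂ) * (taylorCoef k (i + 1 + k) : ℂ) := by
  rw [ell, if_pos (by omega)]
  simp only [Int.toNat_natCast, taylorCoef]
  have hI : Icc 1 (n + 1) = Ico 1 (n + 2) := by ext; simp; omega
  rw [hI, sum_Ico_eq_sum_range]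
  push_cast
  congr 1
  refine sum_congr rfl fun i _ => ?_
  rw [show 1 + i = i + 1 by ring]
  simp only [Nat.add_sub_cancel]
  ring

theorem hasSum_ell {k : ℕ} (hk : 0 < k) {s : ℂ} (hs : 1 / 2 < s.re) (hs1 : s ≠ 1) :
    HasSum (fun n : ℕ => (ell k n : ℂ) * ((1 - s) / s) ^ n)
      (riemannZeta s ^ k - s * ∑ j ∈ range k, (aCoef k j : ℂ) / (s - 1) ^ (j + 1)) := by
  have hne : s - 1 ≠ 0 := sub_ne_zero.mpr hs1
  have hs0 : s ≠ 0 := by rintro rfl; simp at hs; linarith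
  obtain ⟨g, -, hg, hfg⟩ := exists_entire_shift (f := fun s => riemannZeta₁ s ^ k)
    (by fun_prop) (hasSum_taylorCoef k) k
  have hw : ‖(1 - s) / s‖ < 1 := by
    rw [norm_div, div_lt_one (norm_pos_iff.mpr hs0), ← sq_lt_sq₀ (norm_nonneg _) (norm_nonneg _),
      Complex.sq_norm, Complex.sq_norm, Complex.normSq_apply, Complex.normSq_apply]
    simp
    nlinarith
  have h1 := hasSum_comp_inv_one_add hg hw
  have h2 : 1 / (1 + (1 - s) / s) = s := by field_simp; ring
  rw [h2] at h1
  have h3 : riemannZeta s ^ k - s * ∑ j ∈ range k, (aCoef k j : ℂ) / (s - 1) ^ (j + 1) =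
      g s - aCoef k 0 := by
    have h4 := hfg s
    have h5 := mul_sum_aCoef hk s
    have h6 : ∑ j ∈ range k, (aCoef k j : ℂ) * (s - 1) ^ (k - 1 - j) =
        (s - 1) ^ k * ∑ j ∈ range k, (aCoef k j : ℂ) / (s - 1) ^ (j + 1) := by
      rw [mul_sum]
      refine sum_congr rfl fun j hj => ?_
      have hj' := mem_range.mp hj
      rw [show k = (k - 1 - j) + (j + 1) by omega, pow_add]
      field_simp
      congr 2
      omega
    rw [riemannZeta_eq_inv_sub_mul hs1, mul_pow, inv_pow]
    have hnk : (s - 1) ^ k ≠ 0 := pow_ne_zero _ hne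
    apply mul_left_cancel₀ hnk
    rw [mul_sub, mul_inv_cancel_left₀ hnk]
    rw [h6] at h5
    linear_combination h4 - h5
  rw [h3]
  refine (hasSum_nat_add_iff' 1).mp ?_
  simp only [ell_succ_coe, sum_range_one, pow_zero, mul_one]
  convert! h1 using 1
  rw [Nat.cast_zero, ell_zero_eq hk]
  push_cast
  rw [zero_add]
  ring

theorem integral_exp_neg_mul_pow_div_factorial_sq (c : ℝ) (n : ℕ) :
    ∫ x in Set.Ioi (0 : ℝ), (Real.exp (-x) * (c * x ^ n / (Nat.factorial n))) ^ 2 =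
      c ^ 2 * (Nat.centralBinom n) / (2 * 4 ^ n) := by
  have h := Real.integral_rpow_mul_exp_neg_mul_Ioi (a := (2 * n : ℕ) + 1) (r := 2)
    (by positivity) (by norm_num)
  rw [Real.Gamma_nat_eq_factorial] at h
  have h2 : ∀ x ∈ Set.Ioi (0 : ℝ), (Real.exp (-x) * (c * x ^ n / (Nat.factorial n))) ^ 2 =
      c ^ 2 / (Nat.factorial n : ℝ) ^ 2 *
        (x ^ (((2 * n : ℕ) : ℝ) + 1 - 1) * Real.exp (-(2 * x))) := by
    intro x hx
    rw [add_sub_cancel_right, Real.rpow_natCast, show -(2 * x) = -x + -x by ring, Real.exp_add]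
    ring
  rw [setIntegral_congr_fun measurableSet_Ioi h2, integral_const_mul, h]
  have h3 : ((1 : ℝ) / 2) ^ (((2 * n : ℕ) : ℝ) + 1) = 1 / (2 * 4 ^ n) := by
    rw [show (((2 * n : ℕ) : ℝ) + 1) = ((2 * n + 1 : ℕ) : ℝ) by push_cast; ring,
      Real.rpow_natCast, pow_succ, pow_mul]
    norm_num
    rw [one_div, inv_pow]
  have h4 : (Nat.centralBinom n : ℝ) * ((Nat.factorial n : ℝ) ^ 2) =
      (Nat.factorial (2 * n) : ℝ) := by
    have := Nat.choose_mul_factorial_mul_factorial (show n ≤ 2 * n by omega)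
    rw [show 2 * n - n = n by omega] at this
    rw [Nat.centralBinom_eq_two_mul_choose, ← this]
    push_cast
    ring
  rw [h3, ← h4]
  have : (Nat.factorial n : ℝ) ≠ 0 := by positivity
  field_simp

theorem exists_linear_bound_of_tendsto {f : ℝ → ℝ} {a : ℕ → ℝ}
    (hInt : ∀ N : ℕ, IntegrableOn (fun x : ℝ => (f x - Real.exp (-x) *
      ∑ n ∈ range (N + 1), a n * x ^ n / (Nat.factorial n)) ^ 2) (Set.Ioi 0))
    (hlim : Tendsto (fun N : ℕ => ∫ x in Set.Ioi (0 : ℝ), (f x - Real.exp (-x) *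
      ∑ n ∈ range (N + 1), a n * x ^ n / (Nat.factorial n)) ^ 2) atTop (𝓝 0)) :
    ∃ C : ℝ, 0 ≤ C ∧ ∀ n : ℕ, |a n| ≤ C * (n + 1) := by
  obtain ⟨K, hK⟩ := hlim.bddAbove_range
  have hK' : ∀ N : ℕ, ∫ x in Set.Ioi (0 : ℝ), (f x - Real.exp (-x) *
      ∑ n ∈ range (N + 1), a n * x ^ n / (Nat.factorial n)) ^ 2 ≤ K :=
    fun N => hK ⟨N, rfl⟩
  have hK0 : 0 ≤ K := (integral_nonneg fun x => sq_nonneg _).trans (hK' 0)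
  have key : ∀ N : ℕ, a (N + 1) ^ 2 * (Nat.centralBinom (N + 1)) / (2 * 4 ^ (N + 1)) ≤ 4 * K := by
    intro N
    rw [← integral_exp_neg_mul_pow_div_factorial_sq]
    calc _ ≤ ∫ x in Set.Ioi (0 : ℝ), (2 * (f x - Real.exp (-x) *
            ∑ n ∈ range (N + 1), a n * x ^ n / (Nat.factorial n)) ^ 2 +
          2 * (f x - Real.exp (-x) *
            ∑ n ∈ range (N + 1 + 1), a n * x ^ n / (Nat.factorial n)) ^ 2) := by
          refine integral_mono_of_nonneg (Filter.Eventually.of_forall fun x => sq_nonneg _)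
            (((hInt N).const_mul 2).add ((hInt (N + 1)).const_mul 2))
            (Filter.Eventually.of_forall fun x => ?_)
          simp only
          rw [sum_range_succ _ (N + 1), mul_add]
          set A := f x - Real.exp (-x) * ∑ n ∈ range (N + 1), a n * x ^ n / (Nat.factorial n)
            with hA
          set B := Real.exp (-x) * (a (N + 1) * x ^ (N + 1) / (Nat.factorial (N + 1)))
          rw [← sub_sub, ← hA]
          nlinarith [sq_nonneg (2 * A - B)]
      _ ≤ 4 * K := by
          rw [integral_add ((hInt N).const_mul 2) ((hInt (N + 1)).const_mul 2),
            integral_const_mul, integral_const_mul]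
          linarith [hK' N, hK' (N + 1)]
  refine ⟨1 + 16 * K + |a 0|, by positivity, fun n => ?_⟩
  rcases n with _ | N
  · simp; linarith
  · have h1 := key N
    have h2 : (4 : ℝ) ^ (N + 1) ≤ 2 * ((N + 1 : ℕ) : ℝ) * (Nat.centralBinom (N + 1)) := by
      exact_mod_cast Nat.four_pow_le_two_mul_self_mul_centralBinom (N + 1) (by omega)
    rw [div_le_iff₀ (by positivity)] at h1
    have h3 : a (N + 1) ^ 2 ≤ 16 * K * ((N + 1 : ℕ) : ℝ) := by
      have h4 : a (N + 1) ^ 2 * 4 ^ (N + 1) ≤ 16 * K * ((N + 1 : ℕ) : ℝ) * 4 ^ (N + 1) := by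
        calc a (N + 1) ^ 2 * 4 ^ (N + 1)
            ≤ a (N + 1) ^ 2 * (2 * ((N + 1 : ℕ) : ℝ) * (Nat.centralBinom (N + 1))) := by gcongr
          _ = 2 * ((N + 1 : ℕ) : ℝ) * (a (N + 1) ^ 2 * (Nat.centralBinom (N + 1))) := by ring
          _ ≤ 2 * ((N + 1 : ℕ) : ℝ) * (4 * K * (2 * 4 ^ (N + 1))) := by gcongr
          _ = _ := by ring
      exact le_of_mul_le_mul_right h4 (by positivity)
    have h5 : |a (N + 1)| ≤ 1 + a (N + 1) ^ 2 := by
      rw [← sq_abs]; nlinarith [sq_nonneg (|a (N + 1)| - 1), abs_nonneg (a (N + 1))]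
    have h6 : (0 : ℝ) ≤ ((N + 1 : ℕ) : ℝ) := by positivity
    have h7 : 0 ≤ |a 0| * (((N + 1 : ℕ) : ℝ) + 1) := by positivity
    nlinarith

theorem norm_tsum_le_of_linear_bound {a : ℕ → ℂ} {C : ℝ} (ha : ∀ n : ℕ, ‖a n‖ ≤ C * (n + 1))
    {w S : ℂ} (hw : ‖w‖ < 1) (hS : HasSum (fun n => a n * w ^ n) S) :
    ‖S‖ ≤ C / (1 - ‖w‖) ^ 2 := by
  have h := (hasSum_choose_mul_geometric_of_norm_lt_one 1 (r := ‖w‖) (by simpa using hw)).mul_left C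
  rw [mul_one_div] at h
  rw [← hS.tsum_eq]
  refine tsum_of_norm_bounded h fun n => ?_
  rw [norm_mul, norm_pow, ← mul_assoc]
  gcongr
  simpa using ha n

theorem one_sub_norm_ge {s : ℂ} (hs : 1 / 2 < s.re) :
    (2 * s.re - 1) / (2 * ‖s‖ ^ 2) ≤ 1 - ‖(1 - s) / s‖ := by
  have hpos : 0 < ‖s‖ := by linarith [Complex.re_le_norm s]
  have h1 : ‖1 - s‖ ^ 2 = ‖s‖ ^ 2 - (2 * s.re - 1) := by
    rw [Complex.sq_norm, Complex.sq_norm, Complex.normSq_apply, Complex.normSq_apply]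
    simp
    ring
  rw [norm_div]
  have h2 : (2 * s.re - 1) / (2 * ‖s‖ ^ 2) = (1 - (‖1 - s‖ / ‖s‖) ^ 2) / 2 := by
    rw [div_pow, h1]
    field_simp
    ring
  rw [h2]
  nlinarith [sq_nonneg (1 - ‖1 - s‖ / ‖s‖)]

theorem exists_norm_riemannZeta_pow_le {k : ℕ} (hk : 0 < k) {C : ℝ} (hC : 0 ≤ C)
    (h : ∀ n : ℕ, |ell k n| ≤ C * (n + 1)) :
    ∃ B : ℝ, 0 ≤ B ∧ ∀ t : ℝ, 1 ≤ |t| →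
      ‖riemannZeta (((1 / 2 + |t|⁻¹ / 2 : ℝ) : ℂ) + t * I)‖ ^ k ≤ B * |t| ^ 6 := by
  refine ⟨64 * C + 2 * ∑ j ∈ range k, |aCoef k j|, by positivity, fun t ht => ?_⟩
  set s : ℂ := ((1 / 2 + |t|⁻¹ / 2 : ℝ) : ℂ) + t * I with hs
  have htp : 0 < |t| := by linarith
  have hinv : |t|⁻¹ ≤ 1 := inv_le_one_of_one_le₀ ht
  have hinv0 : 0 < |t|⁻¹ := inv_pos.mpr htp
  have hre : s.re = 1 / 2 + |t|⁻¹ / 2 := by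
    rw [hs, Complex.add_re, Complex.ofReal_re, Complex.re_ofReal_mul, Complex.I_re]; ring
  have him : s.im = t := by simp [hs]
  have hs2 : 1 / 2 < s.re := by rw [hre]; linarith
  have hs1 : s ≠ 1 := by
    intro h1
    rw [h1] at him
    simp at him
    rw [← him] at ht; simp at ht; linarith
  have hnorm : ‖s‖ ^ 2 ≤ 2 * |t| ^ 2 := by
    rw [Complex.sq_norm, Complex.normSq_apply, hre, him, sq_abs]
    have : 1 ≤ t ^ 2 := by rw [← sq_abs]; nlinarith
    nlinarith
  have hnorm1 : ‖s‖ ≤ 2 * |t| := by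
    refine le_of_sq_le_sq ?_ (by positivity)
    nlinarith
  have hpos : 0 < ‖s‖ := by linarith [Complex.re_le_norm s]
  have hsub : 1 ≤ ‖s - 1‖ := by
    refine ht.trans ?_
    have := Complex.abs_im_le_norm (s - 1)
    simpa [him] using this
  have hw := one_sub_norm_ge hs2
  have hw2 : |t|⁻¹ / (4 * |t| ^ 2) ≤ 1 - ‖(1 - s) / s‖ := by
    refine le_trans ?_ hw
    rw [hre]
    have : 2 * (1 / 2 + |t|⁻¹ / 2) - 1 = |t|⁻¹ := by ring
    rw [this]
    exact div_le_div_of_nonneg_left hinv0.le (by positivity) (by linarith)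
  have hw3 : 0 < |t|⁻¹ / (4 * |t| ^ 2) := by positivity
  have hS := norm_tsum_le_of_linear_bound (a := fun n : ℕ => (ell k n : ℂ)) (C := C)
    (fun n => by simpa using h n) (by linarith) (hasSum_ell hk hs2 hs1)
  have hS2 : C / (1 - ‖(1 - s) / s‖) ^ 2 ≤ 64 * C * |t| ^ 6 := by
    calc C / (1 - ‖(1 - s) / s‖) ^ 2 ≤ C / (|t|⁻¹ / (4 * |t| ^ 2)) ^ 2 := by gcongr
      _ = 16 * C * |t| ^ 6 := by field_simp; norm_num
      _ ≤ _ := by gcongr; norm_num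
  have hP : ‖s * ∑ j ∈ range k, (aCoef k j : ℂ) / (s - 1) ^ (j + 1)‖ ≤
      2 * (∑ j ∈ range k, |aCoef k j|) * |t| ^ 6 := by
    rw [norm_mul]
    have h1 : ‖∑ j ∈ range k, (aCoef k j : ℂ) / (s - 1) ^ (j + 1)‖ ≤
        ∑ j ∈ range k, |aCoef k j| := by
      refine norm_sum_le_of_le _ fun j _ => ?_
      rw [norm_div, norm_pow, Complex.norm_real, Real.norm_eq_abs]
      exact div_le_self (abs_nonneg _) (one_le_pow₀ hsub)
    have h2 : |t| ≤ |t| ^ 6 := le_self_pow₀ ht (by norm_num)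
    calc _ ≤ (2 * |t| ^ 6) * ∑ j ∈ range k, |aCoef k j| := by gcongr; linarith
      _ = _ := by ring
  rw [← norm_pow]
  have h4 := norm_add_le (riemannZeta s ^ k -
    s * ∑ j ∈ range k, (aCoef k j : ℂ) / (s - 1) ^ (j + 1))
    (s * ∑ j ∈ range k, (aCoef k j : ℂ) / (s - 1) ^ (j + 1))
  rw [sub_add_cancel] at h4
  rw [add_mul]
  linarith

theorem norm_riemannZeta_le {s : ℂ} (hs : 1 / 4 ≤ s.re) (him : 3 / 4 ≤ |s.im|) :
    ‖riemannZeta s‖ ≤ 6 * ‖s‖ := by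
  have hs1 : s ≠ 1 := by rintro rfl; norm_num at him
  have hsub : 3 / 4 ≤ ‖s - 1‖ := by
    refine him.trans ?_
    have := Complex.abs_im_le_norm (s - 1)
    simpa using this
  have hre : 0 < s.re := by linarith
  rw [riemannZeta_eq_inv_sub_mul hs1, norm_mul, norm_inv]
  calc ‖s - 1‖⁻¹ * ‖riemannZeta₁ s‖ ≤ ‖s - 1‖⁻¹ * (‖s‖ * (1 + ‖s - 1‖ / s.re)) := by
        gcongr; exact norm_riemannZeta₁_le hre
    _ = ‖s‖ * (‖s - 1‖⁻¹ + s.re⁻¹) := by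
        have : ‖s - 1‖ ≠ 0 := by linarith
        field_simp
    _ ≤ ‖s‖ * ((3 / 4)⁻¹ + (1 / 4)⁻¹) := by gcongr
    _ ≤ 6 * ‖s‖ := by
        have := norm_nonneg s
        nlinarith

theorem norm_riemannZeta_sub_le {t : ℝ} (ht : 1 ≤ |t|) :
    ‖riemannZeta (1 / 2 + t * I) -
      riemannZeta (((1 / 2 + |t|⁻¹ / 2 : ℝ) : ℂ) + t * I)‖ ≤ 36 := by
  have htp : 0 < |t| := by linarith
  have hinv : |t|⁻¹ ≤ 1 := inv_le_one_of_one_le₀ ht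
  have hinv0 : 0 < |t|⁻¹ := inv_pos.mpr htp
  set S : Set ℂ := {z | 1 / 2 ≤ z.re} ∩ {z | z.re ≤ 1} ∩ ({z | t ≤ z.im} ∩ {z | z.im ≤ t}) with hS
  have hconv : Convex ℝ S :=
    ((convex_halfSpace_re_ge _).inter (convex_halfSpace_re_le _)).inter
      ((convex_halfSpace_im_ge _).inter (convex_halfSpace_im_le _))
  have hne : ∀ z : ℂ, 3 / 4 ≤ |z.im| → z ≠ 1 := by
    rintro z hz rfl; norm_num at hz
  have hmem : ∀ z ∈ S, 1 / 2 ≤ z.re ∧ z.re ≤ 1 ∧ z.im = t := by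
    rintro z ⟨⟨h1, h2⟩, h3, h4⟩
    exact ⟨h1, h2, le_antisymm h4 h3⟩
  have hball : ∀ z ∈ S, ∀ y ∈ Metric.closedBall z (1 / 4), 1 / 4 ≤ y.re ∧ 3 / 4 ≤ |y.im| ∧
      ‖y‖ ≤ 3 * |t| := by
    intro z hz y hy
    obtain ⟨h1, h2, h3⟩ := hmem z hz
    rw [Metric.mem_closedBall, dist_eq_norm] at hy
    have hre := (Complex.abs_re_le_norm (y - z)).trans hy
    have him := (Complex.abs_im_le_norm (y - z)).trans hy
    rw [Complex.sub_re, abs_le] at hre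
    rw [Complex.sub_im, h3] at him
    have h4 : |t| - |y.im| ≤ |y.im - t| := by
      rw [abs_sub_comm]; exact abs_sub_abs_le_abs_sub t y.im
    have h5 : ‖z‖ ≤ 1 + |t| := by
      refine (Complex.norm_le_abs_re_add_abs_im z).trans ?_
      rw [h3, abs_of_nonneg (by linarith)]
      linarith
    have h6 : ‖y‖ ≤ ‖y - z‖ + ‖z‖ := by
      simpa using norm_add_le (y - z) z
    exact ⟨by linarith [hre.1], by linarith, by linarith⟩
  have hderiv : ∀ z ∈ S, ‖deriv riemannZeta z‖ ≤ 72 * |t| := by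
    intro z hz
    have h := Complex.norm_deriv_le_of_forall_mem_sphere_norm_le (c := z) (R := 1 / 4)
      (C := 18 * |t|) (f := riemannZeta) (by norm_num) ?_ ?_
    · refine h.trans (le_of_eq (by ring))
    · refine DifferentiableOn.diffContOnCl fun y hy => ?_
      rw [closure_ball _ (by norm_num)] at hy
      exact (differentiableAt_riemannZeta (hne y (hball z hz y hy).2.1)).differentiableWithinAt
    · intro y hy
      obtain ⟨h1, h2, h3⟩ := hball z hz y (Metric.sphere_subset_closedBall hy)
      refine (norm_riemannZeta_le h1 h2).trans ?_
      linarith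
  have h := hconv.norm_image_sub_le_of_norm_deriv_le (f := riemannZeta)
    (fun z hz => differentiableAt_riemannZeta (hne z ?_)) hderiv
    (x := ((1 / 2 + |t|⁻¹ / 2 : ℝ) : ℂ) + t * I) (y := 1 / 2 + t * I) ?_ ?_
  · refine h.trans ?_
    have : (1 / 2 + t * I : ℂ) - (((1 / 2 + |t|⁻¹ / 2 : ℝ) : ℂ) + t * I) =
        ((-(|t|⁻¹ / 2) : ℝ) : ℂ) := by push_cast; ring
    rw [this, Complex.norm_real, norm_neg, Real.norm_of_nonneg (by positivity)]
    refine le_of_eq ?_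
    field_simp
    norm_num
  · rw [(hmem z hz).2.2]; linarith
  · simp only [hS, Set.mem_inter_iff, Set.mem_ofPred_eq, Complex.add_re, Complex.ofReal_re,
      Complex.re_ofReal_mul, Complex.I_re, Complex.add_im, Complex.ofReal_im,
      Complex.im_ofReal_mul, Complex.I_im]
    norm_num
    constructor <;> linarith
  · simp only [hS, Set.mem_inter_iff, Set.mem_ofPred_eq]
    simp
    norm_num

theorem lindelofHypothesis_of_ell_bound
    (h : ∀ k : ℕ, 0 < k → ∃ C : ℝ, 0 ≤ C ∧ ∀ n : ℕ, |ell k n| ≤ C * (n + 1)) :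
    LindelofHypothesis := by
  intro ε hε
  obtain ⟨k, hk⟩ := exists_nat_gt (6 / ε)
  have hk0 : 0 < k := by
    have : (0 : ℝ) < k := lt_trans (by positivity) hk
    exact_mod_cast this
  have hkR : (0 : ℝ) < k := by exact_mod_cast hk0
  obtain ⟨C, hC, hCb⟩ := h k hk0
  obtain ⟨B, hB, hBb⟩ := exists_norm_riemannZeta_pow_le hk0 hC hCb
  refine ⟨36 + B ^ (1 / (k : ℝ)), fun t ht => ?_⟩
  set s : ℂ := ((1 / 2 + |t|⁻¹ / 2 : ℝ) : ℂ) + t * I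
  have htp : 0 < |t| := by linarith
  have h1 : ‖riemannZeta s‖ ≤ B ^ (1 / (k : ℝ)) * |t| ^ ε := by
    have h2 : ‖riemannZeta s‖ ≤ (B * |t| ^ 6) ^ (1 / (k : ℝ)) := by
      rw [← Real.pow_rpow_inv_natCast (norm_nonneg (riemannZeta s)) hk0.ne', ← one_div]
      exact Real.rpow_le_rpow (by positivity) (hBb t ht) (by positivity)
    refine h2.trans ?_
    rw [Real.mul_rpow hB (by positivity)]
    gcongr
    rw [← Real.rpow_natCast, ← Real.rpow_mul htp.le]
    refine Real.rpow_le_rpow_of_exponent_le ht ?_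
    rw [div_lt_iff₀ hε] at hk
    rw [mul_one_div, div_le_iff₀ hkR]
    push_cast
    linarith
  have h3 := norm_riemannZeta_sub_le ht
  have h4 : 1 ≤ |t| ^ ε := Real.one_le_rpow ht hε.le
  have h5 := norm_add_le (riemannZeta (1 / 2 + t * I) - riemannZeta s) (riemannZeta s)
  rw [sub_add_cancel] at h5
  rw [add_mul]
  linarith

theorem sum_norm_sq_le_integral {c : ℕ → ℂ} (hc : Summable fun n => ‖c n‖) (N : ℕ) :
    ∑ n ∈ range N, ‖c n‖ ^ 2 ≤
      ∫ x in (0 : ℝ)..1, ‖∑' n : ℕ, c n * Complex.exp (2 * π * I * x) ^ n‖ ^ 2 := by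
  have hs : Summable fun n : ℕ => c n • (fourier (n : ℤ) : C(AddCircle (1 : ℝ), ℂ)) := by
    refine Summable.of_norm ?_
    simpa [norm_smul, fourier_norm] using hc
  set F : C(AddCircle (1 : ℝ), ℂ) := ∑' n : ℕ, c n • fourier (n : ℤ) with hF
  have h1 : HasSum (fun n : ℕ => c n • (fourierLp (T := 1) 2 (n : ℤ)))
      (ContinuousMap.toLp 2 (@AddCircle.haarAddCircle 1 _) ℂ F) := by
    have := hs.hasSum.mapL (ContinuousMap.toLp (E := ℂ) 2 (@AddCircle.haarAddCircle 1 _) ℂ)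
    simpa using this
  have h2 : ∀ n : ℕ, inner ℂ (fourierLp (T := 1) 2 (n : ℤ))
      (ContinuousMap.toLp 2 (@AddCircle.haarAddCircle 1 _) ℂ F) = c n := by
    intro n
    have h3 := h1.mapL (innerSL ℂ (fourierLp (T := 1) 2 (n : ℤ)))
    refine h3.unique ?_
    convert! hasSum_ite_eq n (c n) using 2 with m
    have h4 := orthonormal_iff_ite.mp (orthonormal_fourier (T := 1)) n m
    rw [innerSL_apply_apply, inner_smul_right, h4]
    by_cases hmn : m = n
    · simp [hmn]
    · simp [hmn, Ne.symm hmn]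
  have h5 := (orthonormal_fourier (T := 1)).comp (fun n : ℕ => (n : ℤ)) Nat.cast_injective
    |>.sum_inner_products_le (s := range N)
      (x := ContinuousMap.toLp 2 (@AddCircle.haarAddCircle 1 _) ℂ F)
  simp only [Function.comp, h2] at h5
  refine h5.trans (le_of_eq ?_)
  have h6 := ContinuousMap.inner_toLp (@AddCircle.haarAddCircle 1 _) F F
  rw [inner_self_eq_norm_sq_to_K] at h6
  have h7 : ∀ x, F x * (starRingEnd ℂ) (F x) = ((‖F x‖ ^ 2 : ℝ) : ℂ) := fun x => by
    rw [Complex.mul_conj, Complex.normSq_eq_norm_sq]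
  simp only [h7] at h6
  rw [integral_complex_ofReal] at h6
  have h8 : ‖ContinuousMap.toLp 2 (@AddCircle.haarAddCircle 1 _) ℂ F‖ ^ 2 =
      ∫ x, ‖F x‖ ^ 2 ∂(@AddCircle.haarAddCircle 1 _) := by
    refine Complex.ofReal_injective ?_
    rw [← h6, Complex.ofReal_pow]
    rfl
  rw [h8, AddCircle.integral_haarAddCircle, inv_one, one_smul,
    ← AddCircle.intervalIntegral_preimage 1 0, zero_add]
  refine intervalIntegral.integral_congr fun x _ => ?_
  congr 2
  have h9 := hs.hasSum.mapL (ContinuousMap.evalCLM ℂ (x : AddCircle (1 : ℝ)))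
  refine h9.tsum_eq.symm.trans (tsum_congr fun n => ?_)
  rw [ContinuousMap.evalCLM_apply, ContinuousMap.smul_apply, smul_eq_mul, fourier_coe_apply,
    ← Complex.exp_nat_mul]
  congr 2
  push_cast
  ring

theorem norm_inv_one_sub_rpow_le {ρ x : ℝ} (h0 : 0 ≤ ρ) (h1 : ρ < 1) (hx : x ∈ Set.Ioo (0 : ℝ) 1) :
    ‖(1 - ρ * Complex.exp (2 * π * I * x))⁻¹‖ ^ (1 / 2 : ℝ) ≤
      x ^ (-(1 / 2) : ℝ) + (1 - x) ^ (-(1 / 2) : ℝ) := by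
  obtain ⟨hx0, hx1⟩ := hx
  set e := Complex.exp (2 * π * I * x) with he
  have hen : ‖e‖ = 1 := by
    rw [he, show (2 * π * I * x : ℂ) = ((2 * π * x : ℝ) : ℂ) * I by push_cast; ring]
    exact Complex.norm_exp_ofReal_mul_I _
  have hρn : ‖(ρ : ℂ) * e‖ = ρ := by
    rw [norm_mul, hen, mul_one, Complex.norm_real, Real.norm_of_nonneg h0]
  have h2 : 1 - ρ ≤ ‖1 - ρ * e‖ := by
    have := norm_sub_norm_le (1 : ℂ) (ρ * e)
    rwa [norm_one, hρn] at this
  have h3 : ‖1 - e‖ ≤ 2 * ‖1 - ρ * e‖ := by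
    have h4 : 1 - e = (1 - ρ * e) - ((1 - ρ : ℝ) : ℂ) * e := by push_cast; ring
    have h5 : ‖((1 - ρ : ℝ) : ℂ) * e‖ = 1 - ρ := by
      rw [norm_mul, hen, mul_one, Complex.norm_real, Real.norm_of_nonneg (by linarith)]
    rw [h4]
    refine (norm_sub_le _ _).trans ?_
    rw [h5]
    linarith
  have h6 : ‖1 - e‖ = 2 * Real.sin (π * x) := by
    have hsin : 0 ≤ Real.sin (π * x) :=
      Real.sin_nonneg_of_nonneg_of_le_pi (by positivity) (by nlinarith [Real.pi_pos])
    rw [norm_sub_rev, he, show (2 * π * I * x : ℂ) = I * ((2 * π * x : ℝ) : ℂ) by push_cast; ring,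
      Complex.norm_exp_I_mul_ofReal_sub_one, show 2 * π * x / 2 = π * x by ring,
      Real.norm_of_nonneg (by positivity)]
  have hpos : 0 < ‖1 - ρ * e‖ := by linarith
  have key : ∀ y : ℝ, 0 < y → y ≤ 1 / 2 → Real.sin (π * y) = Real.sin (π * x) →
      ‖(1 - ρ * e)⁻¹‖ ^ (1 / 2 : ℝ) ≤ y ^ (-(1 / 2) : ℝ) := by
    intro y hy hy2 hyx
    have h7 : 2 * y ≤ Real.sin (π * y) := by
      have := Real.mul_le_sin (x := π * y) (by positivity) (by nlinarith [Real.pi_pos])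
      rwa [← mul_assoc, div_mul_cancel₀ _ Real.pi_ne_zero] at this
    rw [Real.rpow_neg hy.le, ← Real.inv_rpow hy.le, norm_inv]
    refine Real.rpow_le_rpow (by positivity) (inv_anti₀ hy ?_) (by norm_num)
    linarith
  have hp1 : 0 ≤ x ^ (-(1 / 2) : ℝ) := Real.rpow_nonneg hx0.le _
  have hp2 : 0 ≤ (1 - x) ^ (-(1 / 2) : ℝ) := Real.rpow_nonneg (by linarith) _
  rcases le_total x (1 / 2) with h | h
  · linarith [key x hx0 h rfl]
  · have := key (1 - x) (by linarith) (by linarith) (by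
      rw [show π * (1 - x) = π - π * x by ring, Real.sin_pi_sub])
    linarith

theorem norm_riemannZeta_pow_sub_le {k : ℕ} {C ε : ℝ}
    (hC : ∀ s : ℂ, 1 / 2 ≤ s.re → ‖riemannZeta₁ s‖ ≤ C * ‖s‖ ^ (1 + ε)) (hε : k * ε = 1 / 4)
    {s : ℂ} (hs : 1 / 2 < s.re) (hs1 : ‖s‖ / 2 ≤ ‖s - 1‖) :
    ‖riemannZeta s ^ k - s * ∑ j ∈ range k, (aCoef k j : ℂ) / (s - 1) ^ (j + 1)‖ ≤
      ((2 * C) ^ k + ∑ j ∈ range k, |aCoef k j| * 4 ^ (j + 1)) * ‖s‖ ^ (1 / 4 : ℝ) := by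
  have hn : 1 / 2 < ‖s‖ := hs.trans_le (Complex.re_le_norm s)
  have hn0 : 0 < ‖s‖ := by linarith
  have hsub : 0 < ‖s - 1‖ := by linarith
  have hC0 : 0 ≤ C := by
    have := (norm_nonneg _).trans (hC s hs.le)
    exact nonneg_of_mul_nonneg_left this (by positivity)
  have hs1' : s ≠ 1 := by
    rintro rfl
    simp at hsub
  have h1 : ‖riemannZeta s‖ ≤ 2 * C * ‖s‖ ^ ε := by
    rw [riemannZeta_eq_inv_sub_mul hs1', norm_mul, norm_inv, inv_mul_le_iff₀ hsub]
    refine (hC s hs.le).trans ?_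
    rw [Real.rpow_add hn0, Real.rpow_one]
    have : 0 ≤ C * ‖s‖ ^ ε := by positivity
    nlinarith
  have h2 : ‖riemannZeta s ^ k‖ ≤ (2 * C) ^ k * ‖s‖ ^ (1 / 4 : ℝ) := by
    rw [norm_pow, ← hε, mul_comm (k : ℝ) ε, Real.rpow_mul hn0.le, Real.rpow_natCast, ← mul_pow]
    gcongr
  have h3 : 1 / 2 ≤ ‖s‖ ^ (1 / 4 : ℝ) := by
    calc (1 / 2 : ℝ) = (1 / 2 : ℝ) ^ (1 : ℝ) := by simp
      _ ≤ (1 / 2 : ℝ) ^ (1 / 4 : ℝ) :=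
        Real.rpow_le_rpow_of_exponent_ge (by norm_num) (by norm_num) (by norm_num)
      _ ≤ _ := Real.rpow_le_rpow (by norm_num) hn.le (by norm_num)
  have h4 : ‖s * ∑ j ∈ range k, (aCoef k j : ℂ) / (s - 1) ^ (j + 1)‖ ≤
      (∑ j ∈ range k, |aCoef k j| * 4 ^ (j + 1)) * ‖s‖ ^ (1 / 4 : ℝ) := by
    rw [mul_sum, sum_mul]
    refine norm_sum_le_of_le _ fun j _ => ?_
    rw [norm_mul, norm_div, norm_pow, Complex.norm_real, Real.norm_eq_abs, mul_div_assoc',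
      div_le_iff₀ (by positivity), mul_comm, mul_assoc, mul_assoc]
    refine mul_le_mul_of_nonneg_left ?_ (abs_nonneg _)
    have h5 : (1 : ℝ) ≤ (4 * ‖s - 1‖) ^ j := one_le_pow₀ (by linarith)
    calc ‖s‖ ≤ (4 * ‖s - 1‖) * (1 / 2) := by linarith
      _ ≤ (4 * ‖s - 1‖) * ‖s‖ ^ (1 / 4 : ℝ) := by gcongr
      _ ≤ (4 * ‖s - 1‖) ^ j * ((4 * ‖s - 1‖) * ‖s‖ ^ (1 / 4 : ℝ)) :=
        le_mul_of_one_le_left (by positivity) h5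
      _ = _ := by rw [mul_pow]; ring
  refine (norm_sub_le _ _).trans ?_
  rw [add_mul]
  exact add_le_add h2 h4

theorem re_inv_one_sub_gt {w : ℂ} (hw : ‖w‖ < 1) : 1 / 2 < ((1 - w)⁻¹).re := by
  have hne : 1 - w ≠ 0 := by
    intro h
    have : w = 1 := (sub_eq_zero.mp h).symm
    rw [this, norm_one] at hw
    exact lt_irrefl _ hw
  have h0 : 0 < Complex.normSq (1 - w) := Complex.normSq_pos.mpr hne
  rw [Complex.inv_re, lt_div_iff₀ h0]
  have h1 : Complex.normSq w < 1 := by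
    rw [Complex.normSq_eq_norm_sq]
    nlinarith [norm_nonneg w]
  rw [Complex.normSq_apply] at h1 ⊢
  simp only [Complex.sub_re, Complex.one_re, Complex.sub_im, Complex.one_im]
  nlinarith

theorem LindelofHypothesis.summable_ell_sq (h : LindelofHypothesis) {k : ℕ} (hk : 0 < k) :
    Summable fun n : ℕ => ell k n ^ 2 := by
  have hk0 : (0 : ℝ) < k := by exact_mod_cast hk
  obtain ⟨C, hC⟩ := h.norm_riemannZeta₁_le (ε := 1 / (4 * k)) (by positivity)
  have hε : (k : ℝ) * (1 / (4 * k)) = 1 / 4 := by field_simp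
  set B := (2 * C) ^ k + ∑ j ∈ range k, |aCoef k j| * 4 ^ (j + 1) with hB
  have hsum : ∀ w : ℂ, ‖w‖ < 1 → 1 / 2 ≤ ‖w‖ → ∃ v : ℂ,
      HasSum (fun n : ℕ => (ell k n : ℂ) * (-w) ^ n) v ∧ ‖v‖ ≤ B * ‖(1 - w)⁻¹‖ ^ (1 / 4 : ℝ) := by
    intro w hw hw2
    have hre := re_inv_one_sub_gt hw
    have hne : 1 - w ≠ 0 := by
      intro h
      rw [h] at hre
      simp at hre
      linarith
    have hs1 : (1 - w)⁻¹ - 1 = w * (1 - w)⁻¹ := by field_simp; ring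
    have hn0 : 0 < ‖(1 - w)⁻¹‖ := by
      have := Complex.re_le_norm (1 - w)⁻¹
      linarith
    have hle : ‖(1 - w)⁻¹‖ / 2 ≤ ‖(1 - w)⁻¹ - 1‖ := by
      rw [hs1, norm_mul]
      nlinarith
    refine ⟨_, ?_, norm_riemannZeta_pow_sub_le hC hε hre hle⟩
    have hs2 : (1 - w)⁻¹ ≠ 1 := by
      intro h
      rw [h] at hle
      norm_num at hle
    have := hasSum_ell hk hre hs2
    rwa [show (1 - (1 - w)⁻¹) / (1 - w)⁻¹ = -w by field_simp; ring] at this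
  have hInt : IntervalIntegrable (fun x : ℝ => x ^ (-(1 / 2) : ℝ) + (1 - x) ^ (-(1 / 2) : ℝ))
      volume 0 1 := by
    have h1 : IntervalIntegrable (fun x : ℝ => x ^ (-(1 / 2) : ℝ)) volume 0 1 :=
      intervalIntegral.intervalIntegrable_rpow' (by norm_num)
    have h2 := h1.comp_sub_left 1
    simp only [sub_zero, sub_self] at h2
    exact h1.add h2.symm
  set M := ∫ x in (0 : ℝ)..1, B ^ 2 * (x ^ (-(1 / 2) : ℝ) + (1 - x) ^ (-(1 / 2) : ℝ)) with hM
  have key : ∀ ρ : ℝ, 1 / 2 ≤ ρ → ρ < 1 → ∀ N : ℕ,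
      ∑ n ∈ range N, (ell k n * ρ ^ n) ^ 2 ≤ M := by
    intro ρ hρ hρ1 N
    have hs : Summable fun n : ℕ => ‖(ell k n : ℂ) * (-(ρ : ℂ)) ^ n‖ := by
      obtain ⟨v, hv, _⟩ := hsum ρ (by rw [Complex.norm_real, Real.norm_of_nonneg] <;> linarith)
        (by rw [Complex.norm_real, Real.norm_of_nonneg] <;> linarith)
      exact hv.summable.norm
    have h1 := sum_norm_sq_le_integral hs N
    have h2 : ∀ n : ℕ, ‖(ell k n : ℂ) * (-(ρ : ℂ)) ^ n‖ ^ 2 = (ell k n * ρ ^ n) ^ 2 := by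
      intro n
      rw [norm_mul, norm_pow, norm_neg, Complex.norm_real, Complex.norm_real, Real.norm_eq_abs,
        Real.norm_eq_abs, ← abs_pow, ← abs_mul, sq_abs]
    simp only [h2] at h1
    refine h1.trans ?_
    rw [hM, intervalIntegral.integral_of_le zero_le_one,
      intervalIntegral.integral_of_le zero_le_one,
      integral_Ioc_eq_integral_Ioo, integral_Ioc_eq_integral_Ioo]
    refine integral_mono_of_nonneg (Filter.Eventually.of_forall fun x => sq_nonneg _) ?_ ?_
    · exact ((hInt.1.mono_set Set.Ioo_subset_Ioc_self).const_mul _)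
    · refine (ae_restrict_iff' measurableSet_Ioo).mpr (Filter.Eventually.of_forall fun x hx => ?_)
      have hwn : ‖(ρ : ℂ) * Complex.exp (2 * π * I * x)‖ = ρ := by
        rw [show (2 * π * I * x : ℂ) = ((2 * π * x : ℝ) : ℂ) * I by push_cast; ring, norm_mul,
          Complex.norm_exp_ofReal_mul_I, mul_one, Complex.norm_real,
          Real.norm_of_nonneg (by linarith)]
      obtain ⟨v, hv, hvB⟩ := hsum (ρ * Complex.exp (2 * π * I * x)) (by rw [hwn]; exact hρ1)
        (by rw [hwn]; exact hρ)
      have h3 : ∑' n : ℕ, (ell k n : ℂ) * (-(ρ : ℂ)) ^ n * Complex.exp (2 * π * I * x) ^ n = v := by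
        rw [← hv.tsum_eq]
        refine tsum_congr fun n => ?_
        rw [mul_assoc, ← mul_pow, neg_mul]
      simp only
      rw [h3]
      calc ‖v‖ ^ 2 ≤ (B * ‖(1 - ρ * Complex.exp (2 * π * I * x))⁻¹‖ ^ (1 / 4 : ℝ)) ^ 2 := by
            gcongr
        _ = B ^ 2 * ‖(1 - ρ * Complex.exp (2 * π * I * x))⁻¹‖ ^ (1 / 2 : ℝ) := by
            rw [mul_pow, ← Real.rpow_natCast (_ ^ (1 / 4 : ℝ)), ← Real.rpow_mul (norm_nonneg _)]
            norm_num
        _ ≤ _ := by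
            gcongr
            exact norm_inv_one_sub_rpow_le (by linarith) hρ1 hx
  refine summable_of_sum_range_le (c := M) (fun n => sq_nonneg _) fun N => ?_
  have hlim : Tendsto (fun ρ : ℝ => ∑ n ∈ range N, (ell k n * ρ ^ n) ^ 2) (𝓝[<] 1)
      (𝓝 (∑ n ∈ range N, (ell k n * 1 ^ n) ^ 2)) := by
    refine Tendsto.mono_left (Continuous.tendsto ?_ 1) nhdsWithin_le_nhds
    fun_prop
  simp only [one_pow, mul_one] at hlim
  refine le_of_tendsto hlim ?_
  filter_upwards [Ioo_mem_nhdsLT (show (1 / 2 : ℝ) < 1 by norm_num)] with ρ hρ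
  exact key ρ hρ.1.le hρ.2 N

theorem integral_log_pow_div_pow (j m : ℕ) :
    ∫ r in Set.Ioi (1 : ℝ), Real.log r ^ j / r ^ (m + 2) =
      (Nat.factorial j) / ((m : ℝ) + 1) ^ (j + 1) := by
  have himage : Real.exp '' Set.Ioi 0 = Set.Ioi 1 := by
    ext y
    refine ⟨?_, fun hy => ⟨Real.log y, Real.log_pos hy, Real.exp_log (by linarith [hy.out])⟩⟩
    rintro ⟨x, hx, rfl⟩
    exact Real.one_lt_exp_iff.mpr hx
  rw [← himage, integral_image_eq_integral_abs_deriv_smul measurableSet_Ioi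
    (fun x _ => (Real.hasDerivAt_exp x).hasDerivWithinAt) Real.exp_injective.injOn]
  have h := Real.integral_rpow_mul_exp_neg_mul_Ioi (a := (j : ℝ) + 1) (r := (m : ℝ) + 1)
    (by positivity) (by positivity)
  rw [Real.Gamma_nat_eq_factorial, Real.div_rpow zero_le_one (by positivity), Real.one_rpow,
    one_div_mul_eq_div] at h
  rw [← Nat.cast_succ j, Real.rpow_natCast] at h
  rw [← Nat.succ_eq_add_one j, ← h]
  refine setIntegral_congr_fun measurableSet_Ioi fun x _ => ?_
  simp only [Real.log_exp, abs_of_pos (Real.exp_pos x), smul_eq_mul]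
  rw [Nat.cast_succ, add_sub_cancel_right, Real.rpow_natCast, Real.exp_neg,
    show ((m : ℝ) + 1) * x = ((m + 1 : ℕ) : ℝ) * x by push_cast; ring, Real.exp_nat_mul]
  have := Real.exp_ne_zero x
  field_simp
  ring

theorem integrableOn_log_pow_div_pow (j m : ℕ) :
    IntegrableOn (fun r : ℝ => Real.log r ^ j / r ^ (m + 2)) (Set.Ioi 1) := by
  by_contra h
  have h1 := integral_log_pow_div_pow j m
  rw [integral_undef h] at h1
  have : 0 < (Nat.factorial j : ℝ) / ((m : ℝ) + 1) ^ (j + 1) := by positivity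
  exact this.ne h1

theorem sum_alternating_choose_mul_choose {i n : ℕ} (h : i ≤ n) :
    ∑ j ∈ range (n + 1), (-1 : ℝ) ^ j * n.choose j * (i + j).choose i =
      if i = n then (-1) ^ n else 0 := by
  have h1 : (fwdDiff 1)^[n] (fun x ↦ x.choose i : ℕ → ℤ) i = if i = n then 1 else 0 := by
    obtain ⟨d, rfl⟩ := Nat.exists_eq_add_of_le' h
    have h2 := fwdDiff_iter_choose 0 i
    simp only [add_zero, Nat.choose_zero_right, Nat.cast_one] at h2
    rw [Function.iterate_add_apply, h2]
    cases d with
    | zero => simp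
    | succ d =>
      rw [Function.iterate_succ_apply, fwdDiff_const, fwdDiff_iter_eq_sum_shift]
      simp
  rw [fwdDiff_iter_eq_sum_shift] at h1
  have h3 := congrArg (fun z : ℤ => (-1 : ℝ) ^ n * z) h1
  simp only [smul_eq_mul, mul_one] at h3
  push_cast at h3
  rw [mul_sum] at h3
  have h4 : (-1 : ℝ) ^ n * (if i = n then 1 else 0) = if i = n then (-1) ^ n else 0 := by
    split_ifs <;> simp
  rw [h4] at h3
  rw [← h3]
  refine sum_congr rfl fun j hj => ?_
  have hj' : j ≤ n := Nat.lt_succ_iff.mp (mem_range.mp hj)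
  obtain ⟨d, rfl⟩ := Nat.exists_eq_add_of_le hj'
  have h5 : (-1 : ℝ) ^ d * (-1) ^ d = 1 := by rw [← mul_pow]; norm_num
  rw [Nat.add_sub_cancel_left, pow_add]
  linear_combination (-(-1 : ℝ) ^ j * ((j + d).choose j) * ((i + j).choose i)) * h5

theorem integral_laguerre_mul_div_pow (n m : ℕ) :
    ∫ r in Set.Ioi (1 : ℝ), laguerre n (Real.log r) / r * (1 / r ^ (m + 2)) =
      1 / ((m : ℝ) + 2) * (1 - 1 / ((m : ℝ) + 2)) ^ n := by
  have h1 : ∀ r : ℝ, laguerre n (Real.log r) / r * (1 / r ^ (m + 2)) =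
      ∑ j ∈ range (n + 1), (n.choose j : ℝ) * (-1) ^ j / (Nat.factorial j) *
        (Real.log r ^ j / r ^ (m + 1 + 2)) := by
    intro r
    rw [laguerre, sum_div, sum_mul]
    refine sum_congr rfl fun j _ => ?_
    rw [show m + 1 + 2 = (m + 2) + 1 by ring, pow_succ]
    rw [div_eq_mul_inv _ r, div_eq_mul_inv _ (_ * r), mul_inv]
    ring
  simp only [h1]
  rw [integral_finsetSum _ fun j _ => (integrableOn_log_pow_div_pow j (m + 1)).const_mul _]
  simp only [integral_const_mul, integral_log_pow_div_pow]
  rw [show 1 - 1 / ((m : ℝ) + 2) = -(1 / ((m : ℝ) + 2)) + 1 by ring, add_pow, mul_sum]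
  refine sum_congr rfl fun j _ => ?_
  have h2 : ((m : ℝ) + 2) ≠ 0 := by positivity
  have h3 : (Nat.factorial j : ℝ) ≠ 0 := by positivity
  rw [show (((m + 1 : ℕ) : ℝ) + 1) = (m : ℝ) + 2 by push_cast; ring, neg_pow (1 / _),
    one_pow, div_pow,
    one_pow]
  field_simp
  ring

theorem laguerre_mul_laguerre_div (m n : ℕ) (r : ℝ) :
    laguerre m (Real.log r) / r * (laguerre n (Real.log r) / r) =
      ∑ i ∈ range (m + 1), ∑ j ∈ range (n + 1),
        (m.choose i : ℝ) * (-1) ^ i / (Nat.factorial i) *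
          ((n.choose j : ℝ) * (-1) ^ j / (Nat.factorial j)) *
          (Real.log r ^ (i + j) / r ^ (0 + 2)) := by
  rw [laguerre, laguerre, sum_div, sum_div, sum_mul_sum]
  refine sum_congr rfl fun i _ => sum_congr rfl fun j _ => ?_
  rw [zero_add, pow_add, sq, div_eq_mul_inv _ r, div_eq_mul_inv _ (r * r), mul_inv]
  ring

theorem integrableOn_laguerre_mul_laguerre (m n : ℕ) :
    IntegrableOn (fun r : ℝ => laguerre m (Real.log r) / r * (laguerre n (Real.log r) / r))
      (Set.Ioi 1) := by
  simp only [laguerre_mul_laguerre_div]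
  exact integrable_finsetSum _ fun i _ => integrable_finsetSum _ fun j _ =>
    (integrableOn_log_pow_div_pow (i + j) 0).const_mul _

theorem integral_laguerre_mul_laguerre_of_le {m n : ℕ} (hmn : m ≤ n) :
    ∫ r in Set.Ioi (1 : ℝ), laguerre m (Real.log r) / r * (laguerre n (Real.log r) / r) =
      if m = n then 1 else 0 := by
  simp only [laguerre_mul_laguerre_div]
  rw [integral_finsetSum _ fun i _ => integrable_finsetSum _ fun j _ =>
    (integrableOn_log_pow_div_pow (i + j) 0).const_mul _]
  have h1 : ∀ i ∈ range (m + 1), ∫ r in Set.Ioi (1 : ℝ), ∑ j ∈ range (n + 1),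
        (m.choose i : ℝ) * (-1) ^ i / (Nat.factorial i) *
          ((n.choose j : ℝ) * (-1) ^ j / (Nat.factorial j)) *
          (Real.log r ^ (i + j) / r ^ (0 + 2)) =
      (m.choose i : ℝ) * (-1) ^ i * if i = n then (-1) ^ n else 0 := by
    intro i hi
    have hin : i ≤ n := (Nat.lt_succ_iff.mp (mem_range.mp hi)).trans hmn
    rw [integral_finsetSum _ fun j _ => (integrableOn_log_pow_div_pow (i + j) 0).const_mul _,
      ← sum_alternating_choose_mul_choose hin, mul_sum]
    refine sum_congr rfl fun j _ => ?_
    rw [integral_const_mul, integral_log_pow_div_pow]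
    have h2 : ((i + j).choose i : ℝ) * Nat.factorial i * Nat.factorial j =
        Nat.factorial (i + j) := by
      rw [Nat.choose_symm_add]
      exact_mod_cast Nat.add_choose_mul_factorial_mul_factorial i j
    rw [← h2]
    have h3 : (Nat.factorial i : ℝ) ≠ 0 := by positivity
    have h4 : (Nat.factorial j : ℝ) ≠ 0 := by positivity
    simp only [Nat.cast_zero, zero_add, one_pow, div_one]
    field_simp
  rw [sum_congr rfl h1]
  split_ifs with h
  · subst h
    rw [sum_eq_single m]
    · rw [if_pos rfl, Nat.choose_self, Nat.cast_one, one_mul, ← mul_pow]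
      norm_num
    · intro b _ hb
      rw [if_neg hb, mul_zero]
    · simp
  · refine sum_eq_zero fun i hi => ?_
    have := mem_range.mp hi
    rw [if_neg (by omega), mul_zero]

theorem integral_laguerre_mul_laguerre (m n : ℕ) :
    ∫ r in Set.Ioi (1 : ℝ), laguerre m (Real.log r) / r * (laguerre n (Real.log r) / r) =
      if m = n then 1 else 0 := by
  rcases le_total m n with h | h
  · exact integral_laguerre_mul_laguerre_of_le h
  · simp only [mul_comm (laguerre m _ / _)]
    rw [integral_laguerre_mul_laguerre_of_le h]
    simp only [eq_comm]

theorem hasSum_laguerre (x u : ℝ) (hx : 0 ≤ x) (hu : 0 ≤ u) :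
    HasSum (fun n : ℕ => Real.exp (-x) * (x ^ n / (Nat.factorial n)) * laguerre n u)
      (besselJ0 (2 * Real.sqrt (x * u))) := by
  have hJ : ∀ m : ℕ, (-1 : ℝ) ^ m * (2 * Real.sqrt (x * u) / 2) ^ (2 * m) /
      ((Nat.factorial m : ℝ) ^ 2) = (-(x * u)) ^ m / (Nat.factorial m : ℝ) ^ 2 := by
    intro m
    rw [mul_div_cancel_left₀ _ two_ne_zero, pow_mul, Real.sq_sqrt (mul_nonneg hx hu),
      neg_pow (x * u)]
  have hs1 : Summable fun m : ℕ => ‖(-(x * u)) ^ m / (Nat.factorial m : ℝ) ^ 2‖ := by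
    refine Summable.of_nonneg_of_le (fun m => norm_nonneg _) (fun m => ?_)
      (Real.summable_pow_div_factorial (x * u))
    rw [norm_div, norm_pow, norm_neg, Real.norm_of_nonneg (mul_nonneg hx hu),
      Real.norm_of_nonneg (by positivity)]
    have : (1 : ℝ) ≤ Nat.factorial m := by exact_mod_cast Nat.factorial_pos m
    gcongr
    nlinarith
  have hs2 : Summable fun m : ℕ => ‖x ^ m / (Nat.factorial m : ℝ)‖ :=
    (Real.summable_pow_div_factorial x).norm
  have h := (hasSum_sum_range_mul_of_summable_norm hs1 hs2).mul_left (Real.exp (-x))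
  have hexp : ∑' n : ℕ, x ^ n / (Nat.factorial n : ℝ) = Real.exp x := by
    rw [Real.exp_eq_exp_ℝ, NormedSpace.exp_eq_tsum_div]
  rw [hexp, mul_comm _ (Real.exp x), ← mul_assoc, ← Real.exp_add, neg_add_cancel, Real.exp_zero,
    one_mul] at h
  unfold besselJ0
  simp only [hJ]
  convert! h using 2 with n
  rw [mul_assoc, laguerre, mul_sum]
  congr 1
  refine sum_congr rfl fun j hj => ?_
  have hj' : j ≤ n := Nat.lt_succ_iff.mp (mem_range.mp hj)
  obtain ⟨d, rfl⟩ := Nat.exists_eq_add_of_le hj'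
  have h2 : ((j + d).choose j : ℝ) * Nat.factorial j * Nat.factorial d = Nat.factorial (j + d) := by
    rw [Nat.choose_symm_add]
    exact_mod_cast Nat.add_choose_mul_factorial_mul_factorial j d
  have h3 : (Nat.factorial j : ℝ) ≠ 0 := by positivity
  have h4 : (Nat.factorial d : ℝ) ≠ 0 := by positivity
  have h5 : ((j + d).choose j : ℝ) ≠ 0 := by
    have := Nat.choose_pos (show j ≤ j + d by omega)
    positivity
  rw [← h2, Nat.add_sub_cancel_left, neg_pow (x * u), mul_pow, pow_add]
  field_simp

theorem LSeriesHasSum_dk {k : ℕ} (hk : 0 < k) {s : ℂ} (hs : 1 < s.re) :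
    LSeriesHasSum (fun n => (dk k n : ℂ)) s (riemannZeta s ^ k) := by
  induction k, hk using Nat.le_induction with
  | base =>
    simpa [dk] using ArithmeticFunction.LSeriesHasSum_zeta hs
  | succ k hk ih =>
    have h := ArithmeticFunction.LSeriesHasSum_mul
      (f := ((ArithmeticFunction.zeta ^ k : ArithmeticFunction ℕ) : ArithmeticFunction ℂ))
      (g := (ArithmeticFunction.zeta : ArithmeticFunction ℂ)) (a := riemannZeta s ^ k)
      (b := riemannZeta s) (s := s) (by simpa [dk] using ih)
      (by simpa using ArithmeticFunction.LSeriesHasSum_zeta hs)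
    rw [← ArithmeticFunction.natCoe_mul, ← pow_succ, ← pow_succ] at h
    simpa [dk] using h

theorem exists_sum_dk_le {k : ℕ} (hk : 0 < k) :
    ∃ C : ℝ, 0 ≤ C ∧ ∀ N : ℕ, ∑ n ∈ Icc 1 N, (dk k n : ℝ) ≤ C * (N : ℝ) ^ (3 / 2 : ℝ) := by
  have hs := (LSeriesHasSum_dk hk (s := ((3 / 2 : ℝ) : ℂ)) (by norm_num)).LSeriesSummable
  have hs2 : Summable fun n => ‖LSeries.term (fun n => (dk k n : ℂ)) ((3 / 2 : ℝ) : ℂ) n‖ :=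
    hs.norm
  refine ⟨∑' n, ‖LSeries.term (fun n => (dk k n : ℂ)) ((3 / 2 : ℝ) : ℂ) n‖,
    tsum_nonneg fun n => norm_nonneg _, fun N => ?_⟩
  refine le_trans ?_ (mul_le_mul_of_nonneg_right
    (hs2.sum_le_tsum (Icc 1 N) fun n _ => norm_nonneg _) (by positivity))
  rw [sum_mul]
  refine sum_le_sum fun n hn => ?_
  obtain ⟨h1, h2⟩ := mem_Icc.mp hn
  have h3 : (0 : ℝ) < n := by exact_mod_cast h1
  rw [LSeries.norm_term_eq, if_neg (by omega), Complex.ofReal_re, Complex.norm_natCast,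
    div_mul_eq_mul_div, le_div_iff₀ (by positivity)]
  gcongr

theorem measurable_sum_dk (k : ℕ) :
    Measurable fun r : ℝ => ∑ n ∈ Icc 1 ⌊r⌋₊, (dk k n : ℝ) :=
  (measurable_from_nat (f := fun N => ∑ n ∈ Icc 1 N, (dk k n : ℝ))).comp Nat.measurable_floor

theorem integrableOn_sum_dk {k : ℕ} (hk : 0 < k) (m : ℕ) :
    IntegrableOn (fun r : ℝ => (∑ n ∈ Icc 1 ⌊r⌋₊, (dk k n : ℝ)) / r ^ (m + 3)) (Set.Ioi 1) := by
  obtain ⟨C, hC, hb⟩ := exists_sum_dk_le hk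
  have h1 : IntegrableOn (fun r : ℝ => C * r ^ (-(3 / 2) : ℝ)) (Set.Ioi 1) :=
    (integrableOn_Ioi_rpow_of_lt (by norm_num) one_pos).const_mul C
  refine Integrable.mono' h1
    ((measurable_sum_dk k).div (measurable_id.pow_const _)).aestronglyMeasurable ?_
  refine (ae_restrict_iff' measurableSet_Ioi).mpr (Eventually.of_forall fun r hr => ?_)
  have hr1 : 1 < r := hr
  have hr0 : 0 < r := by linarith
  rw [Real.norm_of_nonneg (by positivity), div_le_iff₀ (by positivity)]
  refine (hb _).trans ?_
  rw [mul_assoc]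
  refine mul_le_mul_of_nonneg_left ?_ hC
  calc ((⌊r⌋₊ : ℝ)) ^ (3 / 2 : ℝ) ≤ r ^ (3 / 2 : ℝ) :=
        Real.rpow_le_rpow (by positivity) (Nat.floor_le hr0.le) (by norm_num)
    _ = r ^ (-(3 / 2) : ℝ) * r ^ 3 := by
        rw [← Real.rpow_natCast r 3, ← Real.rpow_add hr0]; norm_num
    _ ≤ r ^ (-(3 / 2) : ℝ) * r ^ (m + 3) := by
        gcongr
        · exact hr1.le
        · omega

theorem integral_sum_dk {k : ℕ} (hk : 0 < k) (m : ℕ) :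
    ((∫ r in Set.Ioi (1 : ℝ), (∑ n ∈ Icc 1 ⌊r⌋₊, (dk k n : ℝ)) / r ^ (m + 3) : ℝ) : ℂ) =
      riemannZeta (m + 2) ^ k / (m + 2) := by
  obtain ⟨C, hC, hb⟩ := exists_sum_dk_le hk
  have hre : ((m : ℂ) + 2).re = m + 2 := by simp
  have hm : (0 : ℝ) ≤ m := by positivity
  have hne : (m : ℂ) + 2 ≠ 0 := by
    intro h
    rw [h] at hre
    simp at hre
    linarith
  have h1 := LSeries_eq_mul_integral_of_nonneg (fun n => (dk k n : ℝ)) (r := 3 / 2)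
    (s := (m : ℂ) + 2) (by norm_num) (by rw [hre]; linarith) ?_ (fun n => by positivity)
  · have h2 := (LSeriesHasSum_dk hk (s := (m : ℂ) + 2) (by rw [hre]; linarith)).LSeries_eq
    simp only [Complex.ofReal_natCast] at h1
    rw [h2] at h1
    rw [h1, mul_div_cancel_left₀ _ hne, ← integral_complex_ofReal]
    refine setIntegral_congr_fun measurableSet_Ioi fun r hr => ?_
    have hr0 : (0 : ℝ) < r := lt_trans one_pos hr
    push_cast
    rw [div_eq_mul_inv, show -((m : ℂ) + 2 + 1) = -((m + 3 : ℕ) : ℂ) by push_cast; ring,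
      Complex.cpow_neg, Complex.cpow_natCast]
  · refine IsBigO.of_bound C (Eventually.of_forall fun N => ?_)
    rw [Real.norm_of_nonneg (by positivity), Real.norm_of_nonneg (by positivity)]
    exact hb N

theorem Deltak_div_mul_eq (k m : ℕ) {r : ℝ} (hr : 0 < r) :
    Deltak k r / r * (1 / r ^ (m + 2)) = (∑ n ∈ Icc 1 ⌊r⌋₊, (dk k n : ℝ)) / r ^ (m + 3) -
      ∑ j ∈ range k, aCoef k j / (Nat.factorial j) * (Real.log r ^ j / r ^ (m + 2)) := by
  rw [Deltak, sub_div, sub_mul, mul_div_cancel_left₀ _ hr.ne', sum_mul]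
  congr 1
  · rw [pow_succ r (m + 2)]
    field_simp
  · refine sum_congr rfl fun j _ => ?_
    ring

theorem integrableOn_Deltak_div_mul {k : ℕ} (hk : 0 < k) (m : ℕ) :
    IntegrableOn (fun r : ℝ => Deltak k r / r * (1 / r ^ (m + 2))) (Set.Ioi 1) := by
  refine IntegrableOn.congr_fun ((integrableOn_sum_dk hk m).sub
    (integrable_finsetSum (range k) fun j _ =>
      (integrableOn_log_pow_div_pow j m).const_mul (aCoef k j / (Nat.factorial j))))
    (fun r hr => ?_) measurableSet_Ioi
  exact (Deltak_div_mul_eq k m (lt_trans one_pos hr)).symm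

theorem integral_Deltak_div_mul {k : ℕ} (hk : 0 < k) (m : ℕ) :
    ((∫ r in Set.Ioi (1 : ℝ), Deltak k r / r * (1 / r ^ (m + 2)) : ℝ) : ℂ) =
      riemannZeta (m + 2) ^ k / (m + 2) -
        ∑ j ∈ range k, (aCoef k j : ℂ) / (m + 1) ^ (j + 1) := by
  rw [setIntegral_congr_fun measurableSet_Ioi
    fun r hr => Deltak_div_mul_eq k m (lt_trans one_pos hr),
    integral_sub (integrableOn_sum_dk hk m) (integrable_finsetSum (range k) fun j _ =>
      (integrableOn_log_pow_div_pow j m).const_mul (aCoef k j / (Nat.factorial j))),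
    integral_finsetSum _ fun j _ => (integrableOn_log_pow_div_pow j m).const_mul _,
    Complex.ofReal_sub, integral_sum_dk hk]
  congr 1
  rw [Complex.ofReal_sum]
  refine sum_congr rfl fun j _ => ?_
  rw [integral_const_mul, integral_log_pow_div_pow]
  have : (Nat.factorial j : ℂ) ≠ 0 := by exact_mod_cast Nat.factorial_ne_zero j
  push_cast
  field_simp

theorem exists_memLp_hasSum_integral {α : Type*} [MeasurableSpace α] {μ : Measure α}
    {e : ℕ → α → ℝ} (he : ∀ n, MemLp (e n) 2 μ)
    (ho : ∀ m n, ∫ x, e m x * e n x ∂μ = if m = n then 1 else 0)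
    {c : ℕ → ℝ} (hc : Summable fun n => c n ^ 2) :
    ∃ h : α → ℝ, MemLp h 2 μ ∧ ∀ q : α → ℝ, MemLp q 2 μ →
      HasSum (fun n => c n * ∫ x, e n x * q x ∂μ) (∫ x, h x * q x ∂μ) := by
  have hinner : ∀ {f g : α → ℝ} (hf : MemLp f 2 μ) (hg : MemLp g 2 μ),
      inner ℝ (hg.toLp g) (hf.toLp f) = ∫ x, f x * g x ∂μ := by
    intro f g hf hg
    rw [L2.inner_def]
    refine integral_congr_ae ?_
    filter_upwards [hf.coeFn_toLp, hg.coeFn_toLp] with x h1 h2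
    rw [h1, h2]
    rfl
  have hE : Orthonormal ℝ fun n => (he n).toLp (e n) := by
    rw [orthonormal_iff_ite]
    intro m n
    rw [hinner, ho]
    simp only [eq_comm]
  have hs : Summable fun n => c n • (he n).toLp (e n) := by
    have := (hE.orthogonalFamily.summable_iff_norm_sq_summable c).mpr (by simpa using hc)
    simpa using this
  set H := ∑' n, c n • (he n).toLp (e n) with hH
  refine ⟨H, Lp.memLp H, fun q hq => ?_⟩
  have h1 := hs.hasSum.mapL (innerSL ℝ (hq.toLp q))
  simp only [innerSL_apply_apply, inner_smul_right, hinner] at h1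
  rw [← hinner (Lp.memLp H) hq, Lp.toLp_coeFn]
  exact h1

theorem ae_eq_zero_of_integral_div_pow_eq_zero {p : ℝ → ℝ} (hp : IntegrableOn p (Set.Ioi 1))
    (h : ∀ m : ℕ, ∫ r in Set.Ioi (1 : ℝ), p r * (r⁻¹) ^ m = 0) :
    ∀ᵐ r, r ∈ Set.Ioi (1 : ℝ) → p r = 0 := by
  refine isOpen_Ioi.ae_eq_zero_of_integral_contDiff_smul_eq_zero hp.locallyIntegrableOn ?_
  intro g hg hgc hgs
  have hg0 : ∀ r, r ∉ Set.Ioi (1 : ℝ) → g r = 0 := fun r hr =>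
    image_eq_zero_of_notMem_tsupport fun h => hr (hgs h)
  obtain ⟨R, hR⟩ := hgc.isCompact.isBounded.subset_closedBall 0
  have hcont : ContinuousOn (fun y : ℝ => g y⁻¹) (Set.Icc 0 1) := by
    intro y hy
    refine ContinuousAt.continuousWithinAt ?_
    rcases hy.1.eq_or_lt with h0 | h0
    · subst h0
      have hev : (fun y : ℝ => g y⁻¹) =ᶠ[𝓝 0] fun _ => 0 := by
        filter_upwards [Metric.ball_mem_nhds (0 : ℝ) (show 0 < (|R| + 1)⁻¹ by positivity)] with y hy
        by_contra hne
        have h1 : y⁻¹ ∈ tsupport g := subset_tsupport _ hne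
        have h2 := hR h1
        have h3 : (1 : ℝ) < y⁻¹ := hgs h1
        rw [mem_closedBall_zero_iff, Real.norm_eq_abs] at h2
        rw [mem_ball_zero_iff, Real.norm_eq_abs] at hy
        have hy0 : 0 < |y| := by
          rw [abs_pos]
          rintro rfl
          norm_num at h3
        have h4 := inv_anti₀ hy0 hy.le
        rw [inv_inv, ← abs_inv] at h4
        linarith [le_abs_self R]
      exact continuousAt_const.congr hev.symm
    · exact (hg.continuous.continuousAt).comp (continuousAt_inv₀ h0.ne')
  have hpow : ∀ m : ℕ, IntegrableOn (fun r : ℝ => p r * (r⁻¹) ^ m) (Set.Ioi 1) := by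
    intro m
    refine hp.mul_bdd (c := 1) (by fun_prop) ?_
    filter_upwards [ae_restrict_mem measurableSet_Ioi] with r hr
    have hr' : (1 : ℝ) < r := hr
    rw [norm_pow, Real.norm_eq_abs, abs_of_pos (by positivity)]
    exact pow_le_one₀ (by positivity) (inv_le_one_of_one_le₀ hr'.le)
  have heval : ∀ (P : Polynomial ℝ) (r : ℝ), P.eval r⁻¹ * p r =
      ∑ m ∈ range (P.natDegree + 1), P.coeff m * (p r * (r⁻¹) ^ m) := by
    intro P r
    rw [Polynomial.eval_eq_sum_range, sum_mul]
    exact sum_congr rfl fun m _ => by ring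
  have hpolyint : ∀ P : Polynomial ℝ,
      IntegrableOn (fun r : ℝ => P.eval r⁻¹ * p r) (Set.Ioi 1) := by
    intro P
    simp only [heval]
    exact integrable_finsetSum _ fun m _ => (hpow m).const_mul _
  have hpoly : ∀ P : Polynomial ℝ, ∫ r in Set.Ioi (1 : ℝ), P.eval r⁻¹ * p r = 0 := by
    intro P
    simp only [heval]
    rw [integral_finsetSum _ fun m _ => (hpow m).const_mul _]
    exact sum_eq_zero fun m _ => by rw [integral_const_mul, h, mul_zero]
  have hset : ∫ r, g r • p r = ∫ r in Set.Ioi (1 : ℝ), g r * p r :=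
    (setIntegral_eq_integral_of_forall_compl_eq_zero fun r hr => by
      simp [hg0 r hr]).symm
  obtain ⟨M, hM⟩ := hgc.exists_bound_of_continuous hg.continuous
  have hgint : IntegrableOn (fun r : ℝ => g r * p r) (Set.Ioi 1) :=
    hp.bdd_mul (hg.continuous.aestronglyMeasurable) (Eventually.of_forall hM)
  rw [hset, ← abs_eq_zero]
  refine le_antisymm ?_ (abs_nonneg _)
  set A := ∫ r in Set.Ioi (1 : ℝ), |p r| with hA
  have hA0 : 0 ≤ A := integral_nonneg fun r => abs_nonneg _
  refine le_of_forall_pos_le_add fun ε hε => ?_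
  rw [zero_add]
  obtain ⟨P, hP⟩ := exists_polynomial_near_of_continuousOn 0 1 _ hcont (ε / (A + 1))
    (by positivity)
  have hsub : ∫ r in Set.Ioi (1 : ℝ), g r * p r =
      ∫ r in Set.Ioi (1 : ℝ), (g r * p r - P.eval r⁻¹ * p r) := by
    rw [integral_sub hgint (hpolyint P), hpoly, sub_zero]
  calc |∫ r in Set.Ioi (1 : ℝ), g r * p r| ≤ ∫ r in Set.Ioi (1 : ℝ), ε / (A + 1) * |p r| := by
        rw [hsub, ← Real.norm_eq_abs]
        refine norm_integral_le_of_norm_le (hp.abs.const_mul _) ?_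
        filter_upwards [ae_restrict_mem measurableSet_Ioi] with r hr
        have hr' : (1 : ℝ) < r := hr
        have h1 := hP r⁻¹ ⟨by positivity, inv_le_one_of_one_le₀ hr'.le⟩
        rw [inv_inv] at h1
        rw [← sub_mul, norm_mul, Real.norm_eq_abs, Real.norm_eq_abs, abs_sub_comm]
        gcongr
    _ = ε / (A + 1) * A := by rw [integral_const_mul]
    _ ≤ ε := by
        rw [div_mul_eq_mul_div, div_le_iff₀ (by positivity)]
        nlinarith

theorem memLp_laguerre_log_div (n : ℕ) :
    MemLp (fun r : ℝ => laguerre n (Real.log r) / r) 2 (volume.restrict (Set.Ioi 1)) := by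
  have hm : Measurable fun r : ℝ => laguerre n (Real.log r) / r := by
    unfold laguerre
    fun_prop
  rw [memLp_two_iff_integrable_sq hm.aestronglyMeasurable]
  simpa only [pow_two, IntegrableOn] using integrableOn_laguerre_mul_laguerre n n

theorem memLp_one_div_pow (m : ℕ) :
    MemLp (fun r : ℝ => 1 / r ^ (m + 2)) 2 (volume.restrict (Set.Ioi 1)) := by
  have hm : Measurable fun r : ℝ => 1 / r ^ (m + 2) := by fun_prop
  rw [memLp_two_iff_integrable_sq hm.aestronglyMeasurable]
  have h := integrableOn_log_pow_div_pow 0 (2 * m + 2)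
  refine (IntegrableOn.congr_fun h (fun r hr => ?_) measurableSet_Ioi)
  have hr' : (1 : ℝ) < r := hr
  simp only [pow_zero]
  rw [div_pow, one_pow, ← pow_mul]
  congr 2
  ring

theorem hasSum_ell_mul_laguerre_integral {k : ℕ} (hk : 0 < k) (m : ℕ) :
    HasSum (fun n : ℕ => (-1 : ℝ) ^ n * ell k n *
      ∫ r in Set.Ioi (1 : ℝ), laguerre n (Real.log r) / r * (1 / r ^ (m + 2)))
      (∫ r in Set.Ioi (1 : ℝ), Deltak k r / r * (1 / r ^ (m + 2))) := by
  rw [← Complex.hasSum_ofReal, integral_Deltak_div_mul hk]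
  have hs : (m : ℂ) + 2 ≠ 0 := by
    have : ((m + 2 : ℕ) : ℂ) ≠ 0 := Nat.cast_ne_zero.mpr (by omega)
    exact_mod_cast this
  have hs1 : (m : ℂ) + 2 ≠ 1 := by
    have : ((m + 2 : ℕ) : ℂ) ≠ (1 : ℕ) := Nat.cast_injective.ne (by omega)
    exact_mod_cast this
  have hre : (1 : ℝ) / 2 < ((m : ℂ) + 2).re := by
    simp only [add_re, natCast_re, re_ofNat]
    linarith [(Nat.cast_nonneg m : (0 : ℝ) ≤ m)]
  have h := (hasSum_ell hk hre hs1).mul_left (1 / ((m : ℂ) + 2))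
  convert! h using 1
  · funext n
    rw [integral_laguerre_mul_div_pow]
    push_cast
    rw [show (1 - ((m : ℂ) + 2)) / (m + 2) = -1 * (1 - 1 / ((m : ℂ) + 2)) by
      field_simp; ring, mul_pow]
    ring
  · rw [show (m : ℂ) + 2 - 1 = m + 1 by ring]
    field_simp

theorem memLp_Deltak_div {k : ℕ} (hk : 0 < k) (hsum : Summable fun n : ℕ => ell k n ^ 2) :
    MemLp (fun r : ℝ => Deltak k r / r) 2 (volume.restrict (Set.Ioi 1)) ∧
      ∀ n : ℕ, ∫ r in Set.Ioi (1 : ℝ), Deltak k r / r * (laguerre n (Real.log r) / r) =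
        (-1 : ℝ) ^ n * ell k n := by
  obtain ⟨h, hh, hq⟩ := exists_memLp_hasSum_integral (c := fun n : ℕ => (-1 : ℝ) ^ n * ell k n)
    memLp_laguerre_log_div integral_laguerre_mul_laguerre (by
      refine hsum.congr fun n => ?_
      rw [mul_pow, ← pow_mul, mul_comm n, pow_mul]
      norm_num)
  have hmom : ∀ m : ℕ, ∫ r in Set.Ioi (1 : ℝ), h r * (1 / r ^ (m + 2)) =
      ∫ r in Set.Ioi (1 : ℝ), Deltak k r / r * (1 / r ^ (m + 2)) := fun m =>
    (hq _ (memLp_one_div_pow m)).unique (hasSum_ell_mul_laguerre_integral hk m)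
  have hhInt : ∀ m : ℕ, IntegrableOn (fun r : ℝ => h r * (1 / r ^ (m + 2))) (Set.Ioi 1) :=
    fun m => hh.integrable_mul (memLp_one_div_pow m)
  have hexp : ∀ (m : ℕ) (r : ℝ), (Deltak k r / r * (1 / r ^ (0 + 2)) -
      h r * (1 / r ^ (0 + 2))) * (r⁻¹) ^ m =
      Deltak k r / r * (1 / r ^ (m + 2)) - h r * (1 / r ^ (m + 2)) := by
    intro m r
    simp only [one_div, ← inv_pow]
    ring
  have hzero := ae_eq_zero_of_integral_div_pow_eq_zero
    ((integrableOn_Deltak_div_mul hk 0).sub (hhInt 0)) (fun m => by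
      simp only [Pi.sub_apply, hexp]
      rw [integral_sub (integrableOn_Deltak_div_mul hk m) (hhInt m), hmom, sub_self])
  have hae : h =ᵐ[volume.restrict (Set.Ioi (1 : ℝ))] fun r => Deltak k r / r := by
    rw [Filter.EventuallyEq, ae_restrict_iff' measurableSet_Ioi]
    filter_upwards [hzero] with r hr hr1
    have h1 := hr hr1
    have hr' : (0 : ℝ) < r := zero_lt_one.trans hr1
    simp only [Pi.sub_apply, ← sub_mul] at h1
    rcases mul_eq_zero.mp h1 with h2 | h2
    · linarith
    · exact absurd h2 (by positivity)
  refine ⟨hh.ae_eq hae, fun n => ?_⟩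
  have h1 := hq _ (memLp_laguerre_log_div n)
  simp only [integral_laguerre_mul_laguerre] at h1
  have h2 : HasSum (fun j : ℕ => (-1 : ℝ) ^ j * ell k j * if j = n then (1 : ℝ) else 0)
      ((-1 : ℝ) ^ n * ell k n) := by
    have h3 := hasSum_single (f := fun j : ℕ => (-1 : ℝ) ^ j * ell k j *
      if j = n then (1 : ℝ) else 0) n (fun j hj => by simp [hj])
    simpa only [if_true, mul_one] using h3
  rw [← h1.unique h2]
  refine integral_congr_ae ?_
  filter_upwards [hae] with r hr
  rw [hr]

theorem hasSum_phik {k : ℕ} (hk : 0 < k) (hsum : Summable fun n : ℕ => ell k n ^ 2)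
    {x : ℝ} (hx : 0 ≤ x) :
    HasSum (fun n : ℕ => Real.exp (-x) * (x ^ n / (Nat.factorial n)) *
      ((-1 : ℝ) ^ n * ell k n)) (phik k x) := by
  obtain ⟨hD, hcoef⟩ := memLp_Deltak_div hk hsum
  set w : ℕ → ℝ := fun n => Real.exp (-x) * (x ^ n / (Nat.factorial n)) with hw
  have hw0 : ∀ n, 0 ≤ w n := fun n => by positivity
  have hws : Summable w := (Real.summable_pow_div_factorial x).mul_left _
  set F : ℕ → ℝ → ℝ := fun n r => w n * (Deltak k r / r * (laguerre n (Real.log r) / r)) with hF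
  have hprod : ∀ n, IntegrableOn (fun r : ℝ => Deltak k r / r * (laguerre n (Real.log r) / r))
      (Set.Ioi 1) := fun n => hD.integrable_mul (memLp_laguerre_log_div n)
  have hD2 : IntegrableOn (fun r : ℝ => (Deltak k r / r) ^ 2) (Set.Ioi 1) := hD.integrable_sq
  have hnorm : ∀ n, ∫ r in Set.Ioi (1 : ℝ), ‖F n r‖ ≤
      w n * ((∫ r in Set.Ioi (1 : ℝ), (Deltak k r / r) ^ 2) + 1) := by
    intro n
    have h1 : ∫ r in Set.Ioi (1 : ℝ), ((Deltak k r / r) ^ 2 +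
        laguerre n (Real.log r) / r * (laguerre n (Real.log r) / r)) =
        (∫ r in Set.Ioi (1 : ℝ), (Deltak k r / r) ^ 2) + 1 := by
      rw [integral_add hD2 (integrableOn_laguerre_mul_laguerre n n),
        integral_laguerre_mul_laguerre, if_pos rfl]
    rw [← h1, ← integral_const_mul]
    refine integral_mono ((hprod n).const_mul _).norm
      ((hD2.add (integrableOn_laguerre_mul_laguerre n n)).const_mul _) fun r => ?_
    simp only [hF]
    rw [norm_mul, Real.norm_of_nonneg (hw0 n)]
    refine mul_le_mul_of_nonneg_left ?_ (hw0 n)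
    rw [Real.norm_eq_abs, abs_le]
    constructor <;> nlinarith [sq_nonneg (Deltak k r / r + laguerre n (Real.log r) / r),
      sq_nonneg (Deltak k r / r - laguerre n (Real.log r) / r),
      sq_nonneg (Deltak k r / r), sq_nonneg (laguerre n (Real.log r) / r)]
  have h := hasSum_integral_of_summable_integral_norm (F := F)
    (μ := volume.restrict (Set.Ioi 1)) (fun n => (hprod n).const_mul _)
    (Summable.of_nonneg_of_le (fun n => integral_nonneg fun r => norm_nonneg _) hnorm
      (hws.mul_right _))
  simp only [hF, integral_const_mul, hcoef] at h
  convert! h using 1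
  rw [phik]
  refine setIntegral_congr_fun measurableSet_Ioi fun r hr => ?_
  have hr' : (1 : ℝ) < r := hr
  have h1 := ((hasSum_laguerre x (Real.log r) hx (Real.log_nonneg hr'.le)).mul_left
    (Deltak k r / r ^ 2)).tsum_eq
  rw [mul_div_right_comm, ← h1]
  refine tsum_congr fun n => ?_
  simp only [hw]
  ring

theorem lintegral_exp_neg_mul_pow_div_factorial (n : ℕ) :
    ∫⁻ x in Set.Ioi (0 : ℝ), ENNReal.ofReal (Real.exp (-x) * (x ^ n / (Nat.factorial n))) = 1 := by
  have hpt : ∀ x ∈ Set.Ioi (0 : ℝ), (Nat.factorial n : ℝ)⁻¹ *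
      (Real.exp (-x) * x ^ (((n : ℝ) + 1) - 1)) = Real.exp (-x) * (x ^ n / (Nat.factorial n)) := by
    intro x hx
    rw [add_sub_cancel_right, Real.rpow_natCast]
    ring
  have hInt : IntegrableOn (fun x : ℝ => Real.exp (-x) * (x ^ n / (Nat.factorial n)))
      (Set.Ioi 0) :=
    IntegrableOn.congr_fun ((Real.GammaIntegral_convergent (by positivity)).const_mul _) hpt
      measurableSet_Ioi
  rw [← ofReal_integral_eq_lintegral_ofReal hInt, ← setIntegral_congr_fun measurableSet_Ioi hpt,
    integral_const_mul, ← Real.Gamma_eq_integral (by positivity), Real.Gamma_nat_eq_factorial,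
    inv_mul_cancel₀ (by positivity), ENNReal.ofReal_one]
  filter_upwards [ae_restrict_mem measurableSet_Ioi] with x hx
  have hx' : (0 : ℝ) < x := hx
  positivity

theorem sq_le_tsum_of_hasSum_mul {w b : ℕ → ℝ} {d : ℝ} (hw : ∀ n, 0 ≤ w n)
    (hw1 : ∀ s : Finset ℕ, ∑ n ∈ s, w n ≤ 1) (hb : Summable fun n => b n ^ 2 * w n)
    (hd : HasSum (fun n => w n * b n) d) : d ^ 2 ≤ ∑' n, b n ^ 2 * w n := by
  refine le_of_tendsto (hd.pow 2) (Eventually.of_forall fun s => ?_)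
  have h1 := Finset.sum_sq_le_sum_mul_sum_of_sq_le_mul s (r := fun n => w n * b n)
    (f := w) (g := fun n => b n ^ 2 * w n) (fun n _ => hw n)
    (fun n _ => mul_nonneg (sq_nonneg _) (hw n)) (fun n _ => le_of_eq (by ring))
  have h2 : 0 ≤ ∑ n ∈ s, b n ^ 2 * w n :=
    sum_nonneg fun n _ => mul_nonneg (sq_nonneg _) (hw n)
  calc _ ≤ _ := h1
    _ ≤ 1 * ∑ n ∈ s, b n ^ 2 * w n := mul_le_mul_of_nonneg_right (hw1 s) h2
    _ ≤ _ := by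
      rw [one_mul]
      exact hb.sum_le_tsum s fun n _ => mul_nonneg (sq_nonneg _) (hw n)

theorem integrableOn_sq_sub_sum_and_integral_le {f : ℝ → ℝ} {c : ℕ → ℝ}
    (hc : Summable fun n => c n ^ 2)
    (hf : ∀ x : ℝ, 0 < x → HasSum (fun n : ℕ =>
      Real.exp (-x) * (x ^ n / (Nat.factorial n)) * c n) (f x)) (N : ℕ) :
    IntegrableOn (fun x : ℝ => (f x - Real.exp (-x) *
      ∑ n ∈ range N, c n * x ^ n / (Nat.factorial n)) ^ 2) (Set.Ioi 0) ∧
    ∫ x in Set.Ioi (0 : ℝ), (f x - Real.exp (-x) *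
      ∑ n ∈ range N, c n * x ^ n / (Nat.factorial n)) ^ 2 ≤ ∑' n, c (n + N) ^ 2 := by
  set D : ℝ → ℝ := fun x => f x - Real.exp (-x) *
    ∑ n ∈ range N, c n * x ^ n / (Nat.factorial n) with hDdef
  have hcN : Summable fun n => c (n + N) ^ 2 := (summable_nat_add_iff N).mpr hc
  have hfm : AEStronglyMeasurable f (volume.restrict (Set.Ioi 0)) := by
    refine aestronglyMeasurable_of_tendsto_ae (u := atTop)
      (f := fun (M : ℕ) (x : ℝ) => ∑ n ∈ range M,
        Real.exp (-x) * (x ^ n / (Nat.factorial n)) * c n) (fun M => ?_) ?_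
    · exact Continuous.aestronglyMeasurable (by fun_prop)
    · filter_upwards [ae_restrict_mem measurableSet_Ioi] with x hx
      exact (hf x hx).tendsto_sum_nat
  have hDm : AEStronglyMeasurable (fun x => D x ^ 2) (volume.restrict (Set.Ioi 0)) :=
    (hfm.sub (Continuous.aestronglyMeasurable (by fun_prop))).pow 2
  have hDle : ∀ x : ℝ, 0 < x → ENNReal.ofReal (D x ^ 2) ≤ ∑' n, ENNReal.ofReal (c (n + N) ^ 2) *
      ENNReal.ofReal (Real.exp (-x) * (x ^ (n + N) / (Nat.factorial (n + N)))) := by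
    intro x hx
    have hw : ∀ n : ℕ, 0 ≤ Real.exp (-x) * (x ^ n / (Nat.factorial n)) := fun n => by positivity
    have hwsum : HasSum (fun n : ℕ => Real.exp (-x) * (x ^ n / (Nat.factorial n))) 1 := by
      have h := (NormedSpace.expSeries_div_hasSum_exp x).mul_left (Real.exp (-x))
      rwa [← Real.exp_eq_exp_ℝ, ← Real.exp_add, neg_add_cancel, Real.exp_zero] at h
    have hle1 : ∀ n : ℕ, Real.exp (-x) * (x ^ n / (Nat.factorial n)) ≤ 1 := fun n =>
      le_hasSum hwsum n fun m _ => hw m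
    have hsm : Summable fun n => c (n + N) ^ 2 *
        (Real.exp (-x) * (x ^ (n + N) / (Nat.factorial (n + N)))) :=
      Summable.of_nonneg_of_le (fun n => mul_nonneg (sq_nonneg _) (hw _))
        (fun n => mul_le_of_le_one_right (sq_nonneg _) (hle1 _)) hcN
    have hd : HasSum (fun n : ℕ => Real.exp (-x) * (x ^ (n + N) / (Nat.factorial (n + N))) *
        c (n + N)) (D x) := by
      have h := (hasSum_nat_add_iff' N).mpr (hf x hx)
      convert! h using 1
      simp only [hDdef]
      rw [mul_sum]
      congr 1
      exact sum_congr rfl fun n _ => by ring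
    have h := sq_le_tsum_of_hasSum_mul (fun n => hw (n + N)) (fun s => ?_) hsm hd
    · refine (ENNReal.ofReal_le_ofReal h).trans_eq ?_
      rw [ENNReal.ofReal_tsum_of_nonneg (fun n => mul_nonneg (sq_nonneg _) (hw _)) hsm]
      exact tsum_congr fun n => ENNReal.ofReal_mul (sq_nonneg _)
    · have h1 := sum_le_hasSum (s.map (addRightEmbedding N)) (fun n _ => hw n) hwsum
      simpa only [sum_map, addRightEmbedding_apply] using h1
  have hlint : ∫⁻ x in Set.Ioi (0 : ℝ), ENNReal.ofReal (D x ^ 2) ≤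
      ENNReal.ofReal (∑' n, c (n + N) ^ 2) := by
    calc _ ≤ ∫⁻ x in Set.Ioi (0 : ℝ), ∑' n, ENNReal.ofReal (c (n + N) ^ 2) *
          ENNReal.ofReal (Real.exp (-x) * (x ^ (n + N) / (Nat.factorial (n + N)))) :=
          setLIntegral_mono' measurableSet_Ioi hDle
      _ = ∑' n, ∫⁻ x in Set.Ioi (0 : ℝ), ENNReal.ofReal (c (n + N) ^ 2) *
          ENNReal.ofReal (Real.exp (-x) * (x ^ (n + N) / (Nat.factorial (n + N)))) :=
          lintegral_tsum fun n => (by fun_prop : Measurable _).aemeasurable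
      _ = ENNReal.ofReal (∑' n, c (n + N) ^ 2) := by
          rw [ENNReal.ofReal_tsum_of_nonneg (fun n => sq_nonneg _) hcN]
          refine tsum_congr fun n => ?_
          rw [lintegral_const_mul' _ _ ENNReal.ofReal_ne_top,
            lintegral_exp_neg_mul_pow_div_factorial, mul_one]
  constructor
  · refine ⟨hDm, ?_⟩
    rw [hasFiniteIntegral_iff_ofReal (Eventually.of_forall fun x => sq_nonneg _)]
    exact hlint.trans_lt ENNReal.ofReal_lt_top
  · rw [integral_eq_lintegral_of_nonneg_ae (Eventually.of_forall fun x => sq_nonneg _) hDm]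
    exact ENNReal.toReal_le_of_le_ofReal (tsum_nonneg fun n => sq_nonneg _) hlint

theorem stmt6 :
    LindelofHypothesis ↔ ∀ k : ℕ, 0 < k →
      (∀ N : ℕ, IntegrableOn (fun x : ℝ =>
          (phik k x - Real.exp (-x) * ∑ n ∈ Finset.range (N + 1),
            (-1 : ℝ) ^ n * ell k n * x ^ n / (Nat.factorial n)) ^ 2) (Set.Ioi 0)) ∧
      Tendsto (fun N : ℕ => ∫ x in Set.Ioi (0 : ℝ),
          (phik k x - Real.exp (-x) * ∑ n ∈ Finset.range (N + 1),
            (-1 : ℝ) ^ n * ell k n * x ^ n / (Nat.factorial n)) ^ 2) atTop (𝓝 0) := by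
  constructor
  · intro hL k hk
    have hsum := hL.summable_ell_sq hk
    have hc : Summable fun n : ℕ => ((-1 : ℝ) ^ n * ell k n) ^ 2 := by
      refine hsum.congr fun n => ?_
      rw [mul_pow, ← pow_mul, mul_comm n, pow_mul]
      norm_num
    have h := integrableOn_sq_sub_sum_and_integral_le hc
      fun x hx => hasSum_phik hk hsum (le_of_lt hx)
    refine ⟨fun N => (h (N + 1)).1, ?_⟩
    refine squeeze_zero (fun N => integral_nonneg fun x => sq_nonneg _) (fun N => (h (N + 1)).2) ?_
    exact (tendsto_sum_nat_add fun n : ℕ => ((-1 : ℝ) ^ n * ell k n) ^ 2).comp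
      (tendsto_add_atTop_nat 1)
  · intro h
    refine lindelofHypothesis_of_ell_bound fun k hk => ?_
    obtain ⟨C, hC, hb⟩ := exists_linear_bound_of_tendsto (h k hk).1 (h k hk).2
    refine ⟨C, hC, fun n => ?_⟩
    simpa [abs_mul, abs_pow] using hb n
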